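/- Let k be a number field and let (s_𝔭) be a family of nonnegative real numbers, indexed by the nonzero prime ideals 𝔭 of the ring of integers of k, that is bounded above by some constant M. For a real N ≥ 1 set C_N = Σ_{𝔭 : N(𝔭) ≤ N} s_𝔭 · log N(𝔭), D_N = Σ_{𝔭 : N(𝔭) ≤ N} s_𝔭, and π_k(N) = #{𝔭 : N(𝔭) ≤ N}, where N(𝔭) denotes the absolute norm of 𝔭 (each of these sums has finitely many terms). If D_N / π_k(N) converges to a limit L as N → ∞, then C_N / N also converges to L as N → ∞. -/

import Mathlib

open Filter IsDedekindDomain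

/-!
Everything rests on Landau's prime ideal theorem `ϑ_K(x) = ∑_{N(p) ≤ x} log N(p) ~ x`.

The number of ideals near `x`, weighted by a tent function of `log (N(I) / x)`, is
`c x + O(x ^ (1 - 1 / d))` with `d = [K : ℚ]`: as the integer translates of the tent sum to `1`,
each ideal class contributes a sum over a lattice of a Lipschitz function with bounded support.
A Mellin transform converts this into the continuation `ζ_K(s) = Y(s) / (s - 1)` with `Y`
holomorphic beyond `re s = 1` and `Y(1) ≠ 0`. The identity `Λ * 1 = log` and the inequality
`3 + 4 cos t + cos 2t ≥ 0` show that `Y` has no zero on `re s = 1`, so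
`∑ log N(p) / N(p) ^ s - 1 / (s - 1)` is continuous on `re s ≥ 1`, and the Wiener–Ikehara theorem
gives the asymptotics of `ϑ_K`.

Since almost all primes with `N(p) ≤ x` satisfy `log N(p) ~ log x`, also `π_K(x) log x ~ x`, and
for bounded `s` the sum `∑ s_p log N(p)` differs from `log x ∑ s_p` by
`O(π_K(x) log x - ϑ_K(x)) = o(x)`.
-/

namespace PrimeIdealTheorem

section Tauberian

open Topology MeasureTheory Complex
open scoped FourierTransform

variable {h : ℝ → ℂ} {B : ℝ}

lemma integrable_mul_exp_neg_of_bounded (hm : Measurable h) (hB : ∀ u, ‖h u‖ ≤ B)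
    (h0 : ∀ u < 0, h u = 0) {z : ℂ} (hz : 0 < z.re) :
    Integrable fun u : ℝ => h u * exp (-z * u) := by
  have hexp : IntegrableOn (fun u : ℝ => exp (-z * u)) (Set.Ioi 0) :=
    integrableOn_exp_mul_complex_Ioi (by simpa using hz) 0
  have hsupp : Function.support (fun u : ℝ => h u * exp (-z * u)) ⊆ Set.Ici 0 := fun u hu =>
    Set.mem_Ici.2 (not_lt.1 fun hneg => hu (by simp [h0 u hneg]))
  rw [← integrableOn_iff_integrable_of_support_subset hsupp, integrableOn_Ici_iff_integrableOn_Ioi]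
  exact hexp.bdd_mul hm.aestronglyMeasurable (Eventually.of_forall hB)

lemma fourier_exp_mul (φ : ℝ → ℂ) (u v : ℝ) :
    𝓕 (fun t : ℝ => exp (↑(2 * Real.pi * (t * v)) * I) * φ t) u = 𝓕 φ (u - v) := by
  simp only [Real.fourier_eq', smul_eq_mul, ← mul_assoc, ← exp_add]
  congr! 4 with t
  simp only [RCLike.inner_apply, conj_trivial]
  push_cast
  ring

lemma integral_mul_fourier_sub {φ : ℝ → ℂ} (hh : Integrable h) (hφ : Integrable φ) (v : ℝ) :
    ∫ u, h u * 𝓕 φ (u - v) = 𝓕⁻ (fun t => 𝓕 h t * φ t) v := by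
  have hmod : Integrable fun t : ℝ => exp (↑(2 * Real.pi * (t * v)) * I) * φ t :=
    hφ.bdd_mul (c := 1) (by fun_prop)
      (Eventually.of_forall fun t => (norm_exp_ofReal_mul_I _).le)
  have hswap := VectorFourier.integral_fourierIntegral_smul_eq_flip (μ := volume) (ν := volume)
    (L := innerₗ ℝ) Real.continuous_fourierChar continuous_inner hh hmod
  rw [flip_innerₗ] at hswap
  calc ∫ u, h u * 𝓕 φ (u - v)
      = ∫ u, h u * 𝓕 (fun t : ℝ => exp (↑(2 * Real.pi * (t * v)) * I) * φ t) u := by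
        simp only [fourier_exp_mul]
    _ = ∫ t, 𝓕 h t * (exp (↑(2 * Real.pi * (t * v)) * I) * φ t) := hswap.symm
    _ = 𝓕⁻ (fun t => 𝓕 h t * φ t) v := by
        rw [Real.fourierInv_eq']
        congr! 2 with t
        simp only [RCLike.inner_apply, conj_trivial, smul_eq_mul]
        rw [mul_comm v t]
        ring

lemma fourier_mul_exp_neg (ε t : ℝ) :
    𝓕 (fun u : ℝ => h u * exp (-ε * u)) t =
      ∫ u : ℝ, h u * exp (-(ε + 2 * Real.pi * t * I) * u) := by
  rw [Real.fourier_eq']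
  congr! 2 with u
  rw [smul_eq_mul, mul_left_comm, ← exp_add]
  congr 2
  simp only [RCLike.inner_apply, conj_trivial]
  push_cast
  ring

lemma tendsto_integral_mul_exp_neg_mul (hm : Measurable h) (hB : ∀ u, ‖h u‖ ≤ B)
    (h0 : ∀ u < 0, h u = 0) {k : ℝ → ℂ} (hk : Integrable k) :
    Tendsto (fun ε : ℝ => ∫ u : ℝ, h u * exp (-ε * u) * k u) (𝓝[>] 0) (𝓝 (∫ u, h u * k u)) := by
  apply tendsto_integral_filter_of_dominated_convergence (fun u => B * ‖k u‖)
  · exact Eventually.of_forall fun ε =>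
      (hm.mul (by fun_prop)).aestronglyMeasurable.mul hk.aestronglyMeasurable
  · filter_upwards [self_mem_nhdsWithin] with ε (hε : 0 < ε)
    refine Eventually.of_forall fun u => ?_
    rw [norm_mul, norm_mul]
    gcongr
    rcases lt_or_ge u 0 with hu | hu
    · simpa [h0 u hu] using (norm_nonneg _).trans (hB 0)
    · have hexp : ‖exp (-ε * u)‖ ≤ 1 := by
        rw [norm_exp, Real.exp_le_one_iff]
        simpa using mul_nonneg hε.le hu
      simpa using mul_le_mul (hB u) hexp (norm_nonneg _) ((norm_nonneg _).trans (hB u))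
  · exact hk.norm.const_mul B
  · refine Eventually.of_forall fun u => ?_
    have hcont : Continuous fun ε : ℝ => h u * exp (-ε * u) * k u := by fun_prop
    simpa using (hcont.tendsto 0).mono_left (nhdsWithin_le_nhds (s := Set.Ioi 0))

lemma tendsto_fourierInv_boundary {G : ℂ → ℂ} (hG : ContinuousOn G {z | 0 ≤ z.re}) {φ : ℝ → ℂ}
    (hφ : Continuous φ) (hc : HasCompactSupport φ) (v : ℝ) :
    Tendsto (fun ε : ℝ => 𝓕⁻ (fun t : ℝ => G (ε + 2 * Real.pi * t * I) * φ t) v) (𝓝[>] 0)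
      (𝓝 (𝓕⁻ (fun t : ℝ => G (2 * Real.pi * t * I) * φ t) v)) := by
  have hcont : ContinuousOn (fun p : ℝ × ℝ => G (p.1 + 2 * Real.pi * p.2 * I)) {p | 0 ≤ p.1} :=
    hG.comp (by fun_prop) fun p hp => by simpa using hp
  obtain ⟨C, hC⟩ := (isCompact_Icc.prod hc : IsCompact (Set.Icc (0 : ℝ) 1 ×ˢ tsupport φ))
    |>.exists_bound_of_continuousOn (hcont.mono fun p hp => hp.1.1)
  simp only [Real.fourierInv_eq']
  apply tendsto_integral_filter_of_dominated_convergence (fun t => C * ‖φ t‖)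
  · filter_upwards [self_mem_nhdsWithin] with ε (hε : 0 < ε)
    have hGε : Continuous fun t : ℝ => G (ε + 2 * Real.pi * t * I) :=
      hcont.comp_continuous (f := fun t : ℝ => ((ε, t) : ℝ × ℝ)) (by fun_prop) fun _ => hε.le
    exact ((by fun_prop : Continuous fun t : ℝ => exp (↑(2 * Real.pi * inner ℝ t v) * I)).smul
      (hGε.mul hφ)).aestronglyMeasurable
  · filter_upwards [Ioc_mem_nhdsGT one_pos] with ε hε
    refine Eventually.of_forall fun t => ?_
    rw [norm_smul, norm_exp_ofReal_mul_I, one_mul, norm_mul]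
    by_cases ht : φ t = 0
    · simp [ht]
    · gcongr
      exact hC (ε, t) ⟨⟨hε.1.le, hε.2⟩, subset_tsupport _ ht⟩
  · exact (hφ.integrable_of_hasCompactSupport hc).norm.const_mul C
  · refine Eventually.of_forall fun t => ?_
    have hpath : Tendsto (fun ε : ℝ => ((ε, t) : ℝ × ℝ)) (𝓝[>] 0) (𝓝[{p | 0 ≤ p.1}] (0, t)) :=
      tendsto_nhdsWithin_of_tendsto_nhds_of_eventually_within _
        (((by fun_prop : Continuous fun ε : ℝ => ((ε, t) : ℝ × ℝ)).tendsto 0).mono_left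
          nhdsWithin_le_nhds)
        (by filter_upwards [self_mem_nhdsWithin] with ε hε using hε.le)
    have hlim := (hcont (0, t) (by simp)).tendsto.comp hpath
    simp only [Function.comp_def, ofReal_zero, zero_add] at hlim
    exact (hlim.mul_const _).const_smul _

/-- A bounded function `h` on `[0, ∞)` whose Laplace transform extends continuously, by `G`, to the
closed half-plane `0 ≤ Re z`: the analytic input of the Wiener–Ikehara theorem. -/
structure IsLaplaceRegular (h : ℝ → ℂ) (G : ℂ → ℂ) : Prop where
  measurable : Measurable h
  bounded : ∃ B, ∀ u, ‖h u‖ ≤ B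
  eq_zero_of_neg : ∀ u < 0, h u = 0
  continuousOn : ContinuousOn G {z | 0 ≤ z.re}
  laplace_eq : ∀ z : ℂ, 0 < z.re → ∫ u : ℝ, h u * exp (-z * u) = G z

lemma IsLaplaceRegular.integral_mul_fourier_sub {G : ℂ → ℂ} (hreg : IsLaplaceRegular h G)
    {φ : ℝ → ℂ} (hφ : Continuous φ) (hc : HasCompactSupport φ) (hF : Integrable (𝓕 φ)) (v : ℝ) :
    ∫ u, h u * 𝓕 φ (u - v) = 𝓕⁻ (fun t : ℝ => G (2 * Real.pi * t * I) * φ t) v := by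
  obtain ⟨hm, ⟨B, hB⟩, h0, hG, hGe⟩ := hreg
  refine tendsto_nhds_unique (tendsto_integral_mul_exp_neg_mul hm hB h0 (hF.comp_sub_right v))
    ((tendsto_fourierInv_boundary hG hφ hc v).congr' ?_)
  filter_upwards [self_mem_nhdsWithin] with ε (hε : 0 < ε)
  have hint : Integrable fun u : ℝ => h u * exp (-ε * u) :=
    integrable_mul_exp_neg_of_bounded hm hB h0 (z := ε) (by simpa using hε)
  rw [PrimeIdealTheorem.integral_mul_fourier_sub hint (hφ.integrable_of_hasCompactSupport hc)]
  simp only [fourier_mul_exp_neg]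
  congr! 3 with t
  exact (hGe _ (by simpa using hε)).symm

lemma IsLaplaceRegular.tendsto_integral_mul_fourier_sub {G : ℂ → ℂ} (hreg : IsLaplaceRegular h G)
    {φ : ℝ → ℂ} (hφ : Continuous φ) (hc : HasCompactSupport φ) (hF : Integrable (𝓕 φ)) :
    Tendsto (fun v : ℝ => ∫ u, h u * 𝓕 φ (u - v)) atTop (𝓝 0) := by
  simp only [hreg.integral_mul_fourier_sub hφ hc hF, Real.fourierInv_eq_fourier_neg]
  exact (Real.zero_at_infty_fourier _).comp
    (tendsto_neg_atTop_atBot.mono_right atBot_le_cocompact)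

lemma fourier_comp_div (φ : ℝ → ℂ) {l : ℝ} (hl : 0 < l) (x : ℝ) :
    𝓕 (fun t => φ (t / l)) x = l * 𝓕 φ (l * x) := by
  have hscale := Measure.integral_comp_div
    (fun s : ℝ => exp (↑(-2 * Real.pi * inner ℝ (s * l) x) * I) • φ s) l
  rw [abs_of_pos hl, real_smul] at hscale
  simp only [div_mul_cancel₀ _ hl.ne'] at hscale
  rw [Real.fourier_eq', Real.fourier_eq', hscale]
  congr! 7 with v
  simp only [RCLike.inner_apply, conj_trivial]
  ring

lemma exists_schwartz_fourier_compactSupport : ∃ (K : SchwartzMap ℝ ℂ) (φ : ℝ → ℂ),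
    Continuous φ ∧ HasCompactSupport φ ∧ 𝓕 φ = K ∧ ∫ x, K x = 1 := by
  let f : ContDiffBump (0 : ℝ) := ⟨1, 2, one_pos, one_lt_two⟩
  let φ : ℝ → ℂ := fun t => f t
  have hc : HasCompactSupport φ := f.hasCompactSupport.comp_left ofReal_zero
  have hd : ContDiff ℝ (⊤ : ℕ∞) φ := ofRealCLM.contDiff.comp f.contDiff
  have hφ := hd.continuous
  let K : SchwartzMap ℝ ℂ := 𝓕 (hc.toSchwartzMap hd)
  have hK : 𝓕 φ = K := (SchwartzMap.fourier_coe (hc.toSchwartzMap hd)).symm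
  refine ⟨K, φ, hφ, hc, hK, ?_⟩
  have hinv : 𝓕⁻ (𝓕 φ) 0 = φ 0 := congrFun (hφ.fourierInv_fourier_eq
    (hφ.integrable_of_hasCompactSupport hc) (hK ▸ K.integrable)) 0
  have hone : f 0 = 1 := f.one_of_mem_closedBall (by simp [f])
  simpa [hK, Real.fourierInv_eq', φ, hone] using hinv

lemma exists_concentrated_kernel {δ : ℝ} (hδ : 0 < δ) : ∃ φ : ℝ → ℂ,
    Continuous φ ∧ HasCompactSupport φ ∧ Integrable (𝓕 φ) ∧ ∫ x, 𝓕 φ x = 1 ∧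
      Integrable (fun x => |x| * ‖𝓕 φ x‖) ∧ ∫ x, |x| * ‖𝓕 φ x‖ ≤ δ := by
  obtain ⟨K, φ, hφ, hc, hφK, hK1⟩ := exists_schwartz_fourier_compactSupport
  obtain ⟨l, hl, hlδ⟩ := ((eventually_gt_atTop (0 : ℝ)).and
    ((tendsto_const_nhds.div_atTop tendsto_id).eventually_le_const hδ)).exists
      (p := fun l => 0 < l ∧ (∫ x, |x| * ‖K x‖) / l ≤ δ)
  have hFφ : 𝓕 (fun t => φ (t / l)) = fun x => l * K (l * x) := by
    ext x
    rw [fourier_comp_div φ hl, hφK]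
  have hmoment : (fun x => |x| * ‖l * K (l * x)‖) = fun x => |l * x| * ‖K (l * x)‖ := by
    ext x
    simp only [norm_mul, norm_real, Real.norm_eq_abs, abs_mul]
    ring
  have hKx : Integrable fun x => |x| * ‖K x‖ := by simpa using K.integrable_pow_mul volume 1
  refine ⟨fun t => φ (t / l), by fun_prop, ?_, ?_⟩
  · simpa [Function.comp_def, div_eq_mul_inv] using
      hc.comp_homeomorph (Homeomorph.mulRight₀ l⁻¹ (inv_ne_zero hl.ne'))
  rw [hFφ, hmoment]
  refine ⟨(K.integrable.comp_mul_left' hl.ne').const_mul _, ?_, hKx.comp_mul_left' hl.ne', ?_⟩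
  · rw [integral_const_mul, Measure.integral_comp_mul_left K l, hK1, abs_of_pos (by positivity)]
    simp [hl.ne']
  · rwa [Measure.integral_comp_mul_left (fun x => |x| * ‖K x‖) l, abs_of_pos (by positivity),
      smul_eq_mul, ← div_eq_inv_mul]

lemma intervalIntegrable_of_bounded (hm : Measurable h) (hB : ∀ u, ‖h u‖ ≤ B) (a b : ℝ) :
    IntervalIntegrable h volume a b :=
  intervalIntegrable_const.mono_fun hm.aestronglyMeasurable
    (Eventually.of_forall fun u => (hB u).trans (Real.le_norm_self B))

lemma norm_window_sub_window_le (hm : Measurable h) (hB : ∀ u, ‖h u‖ ≤ B) (η v x : ℝ) :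
    ‖(∫ y in (0 : ℝ)..η, h (v + x + y)) - ∫ y in (0 : ℝ)..η, h (v + y)‖ ≤ 2 * B * |x| := by
  have hint := intervalIntegrable_of_bounded hm hB
  have hsmall : ∀ a, ‖∫ y in a..(a + x), h y‖ ≤ B * |x| := fun a => by
    simpa using intervalIntegral.norm_integral_le_of_norm_le_const (a := a) (b := a + x)
      fun u _ => hB u
  have hdiff : (∫ y in (0 : ℝ)..η, h (v + x + y)) - ∫ y in (0 : ℝ)..η, h (v + y) =
      (∫ y in (v + η)..(v + η + x), h y) - ∫ y in v..(v + x), h y := by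
    simp only [intervalIntegral.integral_comp_add_left, add_zero]
    rw [intervalIntegral.integral_interval_sub_interval_comm' (hint _ _) (hint _ _) (hint _ _),
      add_right_comm]
  calc _ ≤ ‖∫ y in (v + η)..(v + η + x), h y‖ + ‖∫ y in v..(v + x), h y‖ :=
        hdiff ▸ norm_sub_le _ _
    _ ≤ 2 * B * |x| := by linarith [hsmall (v + η), hsmall v]

lemma integral_window_convolution (hm : Measurable h) (hB : ∀ u, ‖h u‖ ≤ B) {K : ℝ → ℂ}
    (hK : Integrable K) (η v : ℝ) :
    ∫ y in (0 : ℝ)..η, (∫ u, h u * K (u - (v + y))) =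
      ∫ x, (∫ y in (0 : ℝ)..η, h (v + x + y)) * K x := by
  have hshift : ∀ y, ∫ u, h u * K (u - (v + y)) = ∫ x, h (v + x + y) * K x := fun y => by
    rw [← integral_add_right_eq_self _ (v + y)]
    congr! 4 <;> ring
  simp_rw [hshift, ← intervalIntegral.integral_mul_const]
  refine intervalIntegral_integral_swap ?_
  have : IsFiniteMeasure (volume.restrict (Set.uIoc 0 η)) := by rw [Set.uIoc]; infer_instance
  have hdom : Integrable (fun p : ℝ × ℝ => (1 : ℂ) * K p.2)
      ((volume.restrict (Set.uIoc 0 η)).prod volume) := (integrable_const 1).mul_prod hK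
  simp only [one_mul] at hdom
  exact hdom.bdd_mul
    (by fun_prop : Measurable fun p : ℝ × ℝ => h (v + p.2 + p.1)).aestronglyMeasurable
    (Eventually.of_forall fun p => hB _)

lemma norm_integral_mul_kernel_sub_le {H K : ℝ → ℂ} {C v : ℝ}
    (hH : ∀ x, ‖H (v + x) - H v‖ ≤ C * |x|) (hHK : Integrable fun x => H (v + x) * K x)
    (hK : Integrable K) (hK1 : ∫ x, K x = 1) (hKx : Integrable fun x => |x| * ‖K x‖) :
    ‖(∫ x, H (v + x) * K x) - H v‖ ≤ C * ∫ x, |x| * ‖K x‖ := by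
  have hconst : H v = ∫ x, H v * K x := by rw [integral_const_mul, hK1, mul_one]
  rw [hconst, ← integral_sub hHK (hK.const_mul _), ← integral_const_mul]
  refine norm_integral_le_of_norm_le (hKx.const_mul _) (Eventually.of_forall fun x => ?_)
  rw [← sub_mul, norm_mul, ← mul_assoc]
  gcongr
  exact hH x

lemma integrable_window_mul (hm : Measurable h) (hB : ∀ u, ‖h u‖ ≤ B) {K : ℝ → ℂ}
    (hK : Integrable K) (η v : ℝ) :
    Integrable fun x => (∫ y in (0 : ℝ)..η, h (v + x + y)) * K x := by
  have hlip : LipschitzWith (2 * B).toNNReal fun x => ∫ y in (0 : ℝ)..η, h (v + x + y) := by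
    refine LipschitzWith.of_dist_le_mul fun a b => ?_
    have hab := norm_window_sub_window_le hm hB η (v + b) (a - b)
    rw [add_assoc v b, add_sub_cancel] at hab
    have hB0 := (norm_nonneg _).trans (hB 0)
    rwa [dist_eq_norm, Real.dist_eq, Real.coe_toNNReal _ (by positivity)]
  refine hK.bdd_mul (c := B * |η|) hlip.continuous.aestronglyMeasurable
    (Eventually.of_forall fun x => ?_)
  simpa using intervalIntegral.norm_integral_le_of_norm_le_const (a := 0) (b := η)
    fun y _ => hB (v + x + y)

lemma eventually_norm_window_le (hm : Measurable h) (hB : ∀ u, ‖h u‖ ≤ B) {K : ℝ → ℂ}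
    (hK : Integrable K) (hK1 : ∫ x, K x = 1) (hKx : Integrable fun x => |x| * ‖K x‖)
    (hconv : Tendsto (fun v : ℝ => ∫ u, h u * K (u - v)) atTop (𝓝 0)) (η : ℝ) {δ : ℝ} (hδ : 0 < δ) :
    ∀ᶠ v in atTop, ‖∫ y in (0 : ℝ)..η, h (v + y)‖ ≤ δ * |η| + 2 * B * ∫ x, |x| * ‖K x‖ := by
  obtain ⟨V, hV⟩ := eventually_atTop.1 <|
    (tendsto_zero_iff_norm_tendsto_zero.1 hconv).eventually_le_const hδ
  filter_upwards [eventually_ge_atTop (V + |η|)] with v hv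
  have hsmall : ‖∫ x, (∫ y in (0 : ℝ)..η, h (v + x + y)) * K x‖ ≤ δ * |η| := by
    rw [← integral_window_convolution hm hB hK]
    have hVy : ∀ y ∈ Set.uIoc 0 η, ‖∫ u, h u * K (u - (v + y))‖ ≤ δ := fun y hy => hV (v + y) <| by
      have hy' := Set.abs_sub_left_of_mem_uIcc (Set.uIoc_subset_uIcc hy)
      rw [sub_zero, sub_zero] at hy'
      linarith [neg_le_of_abs_le hy']
    simpa using intervalIntegral.norm_integral_le_of_norm_le_const hVy
  have hclose := norm_integral_mul_kernel_sub_le (H := fun v => ∫ y in (0 : ℝ)..η, h (v + y))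
    (norm_window_sub_window_le hm hB η v) (integrable_window_mul hm hB hK η v) hK hK1 hKx
  exact (norm_le_norm_add_norm_sub _ _).trans (add_le_add hsmall hclose)

lemma IsLaplaceRegular.tendsto_window {G : ℂ → ℂ} (hreg : IsLaplaceRegular h G) (η : ℝ) :
    Tendsto (fun v : ℝ => ∫ y in (0 : ℝ)..η, h (v + y)) atTop (𝓝 0) := by
  obtain ⟨B, hB⟩ := hreg.bounded
  have hB0 : 0 ≤ B := (norm_nonneg _).trans (hB 0)
  rw [tendsto_zero_iff_norm_tendsto_zero]
  refine tendsto_order.2 ⟨fun a ha => Eventually.of_forall fun v => ha.trans_le (norm_nonneg _),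
    fun a ha => ?_⟩
  set δ := a / (|η| + 2 * B + 1)
  have hδ : 0 < δ := by positivity
  obtain ⟨φ, hφ, hc, hF, hF1, hFx, hFδ⟩ := exists_concentrated_kernel hδ
  filter_upwards [eventually_norm_window_le hreg.measurable hB hF hF1 hFx
    (hreg.tendsto_integral_mul_fourier_sub hφ hc hF) η hδ] with v hv
  calc _ ≤ δ * |η| + 2 * B * δ := hv.trans (by gcongr)
    _ < δ * (|η| + 2 * B + 1) := by linarith
    _ = a := div_mul_cancel₀ _ (by positivity)

lemma tendsto_one_of_tendsto_window {f : ℝ → ℝ} (hexp : ∀ u w, u ≤ w → f u ≤ Real.exp (w - u) * f w)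
    (h0 : ∀ u, 0 ≤ f u) (hint : ∀ u w, IntervalIntegrable f volume u w)
    (hwin : ∀ η, 0 < η → Tendsto (fun v => ∫ y in v..(v + η), f y) atTop (𝓝 η)) :
    Tendsto f atTop (𝓝 1) := by
  have hupper : ∀ η, 0 < η → ∀ v, f v ≤ Real.exp η * ((∫ y in v..(v + η), f y) / η) := by
    intro η hη v
    rw [← mul_div_assoc, le_div_iff₀ hη, ← intervalIntegral.integral_const_mul]
    calc f v * η = ∫ y in v..(v + η), f v := by simp [mul_comm]
      _ ≤ _ := intervalIntegral.integral_mono_on (by linarith) (by simp) ((hint _ _).const_mul _)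
          fun y hy => (hexp v y hy.1).trans <| by
            gcongr
            · exact h0 y
            · linarith [hy.2]
  have hlower : ∀ η, 0 < η → ∀ v, (∫ y in v..(v + η), f y) / η ≤ Real.exp η * f (v + η) := by
    intro η hη v
    rw [div_le_iff₀ hη]
    calc _ ≤ ∫ y in v..(v + η), Real.exp η * f (v + η) :=
          intervalIntegral.integral_mono_on (by linarith) (hint _ _) (by simp)
            fun y hy => (hexp y (v + η) hy.2).trans <| by
              gcongr
              · exact h0 _
              · linarith [hy.1]
      _ = _ := by simp [mul_left_comm, mul_comm]
  have havg : ∀ η, 0 < η → Tendsto (fun v => (∫ y in v..(v + η), f y) / η) atTop (𝓝 1) :=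
    fun η hη => by simpa [hη.ne'] using (hwin η hη).div_const η
  refine tendsto_order.2 ⟨fun a ha => ?_, fun a ha => ?_⟩
  · have hlim : Tendsto (fun η : ℝ => Real.exp η * a) (𝓝[>] 0) (𝓝 a) := by
      simpa using ((by fun_prop : Continuous fun η : ℝ => Real.exp η * a).tendsto 0).mono_left
        (nhdsWithin_le_nhds (s := Set.Ioi 0))
    obtain ⟨η, hηa, hη⟩ := ((hlim.eventually_lt_const ha).and self_mem_nhdsWithin).exists
    have hev := (tendsto_atTop_add_const_right atTop (-η) tendsto_id).eventually
      ((havg η hη).eventually_const_lt hηa)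
    filter_upwards [hev] with v hv
    have := hv.trans_le (hlower η hη _)
    simp only [id, neg_add_cancel_right] at this
    exact lt_of_mul_lt_mul_left this (Real.exp_pos η).le
  · have hlim : Tendsto (fun η : ℝ => Real.exp η) (𝓝[>] 0) (𝓝 1) := by
      simpa using (Real.continuous_exp.tendsto 0).mono_left (nhdsWithin_le_nhds (s := Set.Ioi 0))
    obtain ⟨η, hηa, hη⟩ := ((hlim.eventually_lt_const ha).and self_mem_nhdsWithin).exists
    have hev := (havg η hη).const_mul (Real.exp η)
    rw [mul_one] at hev
    filter_upwards [hev.eventually_lt_const hηa] with v hv using (hupper η hη v).trans_lt hv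

lemma isLaplaceRegular_sub_one {f : ℝ → ℝ} (hfm : Measurable f) (h0 : ∀ u, 0 ≤ f u) {B : ℝ}
    (hfB : ∀ u, 0 < u → f u ≤ B) {G : ℂ → ℂ} (hG : ContinuousOn G {z | 0 ≤ z.re})
    (hGe : ∀ z : ℂ, 0 < z.re → ∫ u in Set.Ioi (0 : ℝ), ((f u : ℂ) - 1) * exp (-z * u) = G z) :
    IsLaplaceRegular ((Set.Ioi (0 : ℝ)).indicator fun u => (f u : ℂ) - 1) G where
  measurable := (by fun_prop : Measurable fun u => (f u : ℂ) - 1).indicator measurableSet_Ioi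
  bounded := by
    refine ⟨B + 1, fun u => ?_⟩
    rw [norm_indicator_eq_indicator_norm]
    refine Set.indicator_apply_le' (fun hu => (norm_sub_le _ _).trans ?_) fun _ => ?_
    · rw [norm_real, Real.norm_of_nonneg (h0 u), norm_one]
      gcongr
      exact hfB u hu
    · linarith [(h0 1).trans (hfB 1 one_pos)]
  eq_zero_of_neg u hu := Set.indicator_of_notMem (not_lt.2 hu.le) _
  continuousOn := hG
  laplace_eq z hz := by
    rw [← hGe z hz, ← integral_indicator measurableSet_Ioi]
    simp only [Set.indicator_mul_left]

lemma tendsto_window_of_laplace {f : ℝ → ℝ} {G : ℂ → ℂ}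
    (hreg : IsLaplaceRegular ((Set.Ioi (0 : ℝ)).indicator fun u => (f u : ℂ) - 1) G)
    (hint : ∀ u w, IntervalIntegrable f volume u w) {η : ℝ} (hη : 0 < η) :
    Tendsto (fun v => ∫ y in v..(v + η), f y) atTop (𝓝 η) := by
  have hre := ((continuous_re.tendsto 0).comp (hreg.tendsto_window η)).add_const η
  rw [zero_re, zero_add] at hre
  refine hre.congr' ?_
  filter_upwards [eventually_ge_atTop 0] with v hv
  have hwindow : ∫ y in (0 : ℝ)..η, (Set.Ioi (0 : ℝ)).indicator (fun u => (f u : ℂ) - 1) (v + y) =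
      ((∫ y in v..(v + η), (f y - 1) : ℝ) : ℂ) := by
    rw [intervalIntegral.integral_comp_add_left, add_zero, ← intervalIntegral.integral_ofReal]
    refine intervalIntegral.integral_congr_Ioo_of_le (by linarith) fun y hy => ?_
    rw [Set.indicator_of_mem (Set.mem_Ioi.2 (hv.trans_lt hy.1))]
    push_cast
    rfl
  simp only [Function.comp_apply, hwindow, ofReal_re]
  rw [intervalIntegral.integral_sub (hint _ _) (by simp)]
  simp

theorem tendsto_div_self_of_laplace {θ : ℝ → ℝ} (hmono : Monotone θ) (h0 : ∀ x, 0 ≤ θ x) {B : ℝ}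
    (hB : ∀ x, 1 ≤ x → θ x ≤ B * x) {G : ℂ → ℂ} (hG : ContinuousOn G {z | 0 ≤ z.re})
    (hGe : ∀ z : ℂ, 0 < z.re → ∫ u in Set.Ioi (0 : ℝ),
      ((θ (Real.exp u) / Real.exp u : ℝ) - 1 : ℂ) * exp (-z * u) = G z) :
    Tendsto (fun x => θ x / x) atTop (𝓝 1) := by
  set f : ℝ → ℝ := fun u => θ (Real.exp u) / Real.exp u with hf
  have hf0 : ∀ u, 0 ≤ f u := fun u => div_nonneg (h0 _) (Real.exp_pos _).le
  have hfB : ∀ u, 0 < u → f u ≤ B := fun u hu =>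
    (div_le_iff₀ (Real.exp_pos u)).2 (hB _ (Real.one_le_exp hu.le))
  have hfm : Measurable f := by
    have := hmono.measurable
    fun_prop
  have hint : ∀ u w, IntervalIntegrable f volume u w := fun u w => by
    simp only [hf, div_eq_mul_inv]
    exact (hmono.comp Real.exp_monotone).intervalIntegrable.mul_continuousOn
      (Real.continuous_exp.inv₀ Real.exp_ne_zero).continuousOn
  have hexp : ∀ u w, u ≤ w → f u ≤ Real.exp (w - u) * f w := fun u w huw => by
    rw [Real.exp_sub, div_mul_div_comm, mul_comm (Real.exp w),
      mul_div_mul_right _ _ (Real.exp_pos w).ne']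
    exact div_le_div_of_nonneg_right (hmono (Real.exp_le_exp.2 huw)) (Real.exp_pos u).le
  have hf1 := tendsto_one_of_tendsto_window hexp hf0 hint fun η hη =>
    tendsto_window_of_laplace (isLaplaceRegular_sub_one hfm hf0 hfB hG hGe) hint hη
  refine (hf1.comp Real.tendsto_log_atTop).congr' ?_
  filter_upwards [eventually_gt_atTop 0] with x hx
  simp [hf, Real.exp_log hx]

end Tauberian

section Summatory

open MeasureTheory

variable {ι : Type*} {n : ι → ℝ}

/-- The summatory function `x ↦ ∑_{n i ≤ x} a i` of a family `a` indexed by elements of size `n i`.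
The junk value `0` for an infinite support does not occur when `n` has finite sublevel sets. -/
noncomputable def summatory {E : Type*} [AddCommMonoid E] (n : ι → ℝ) (a : ι → E) (x : ℝ) : E :=
  ∑ᶠ i ∈ {i | n i ≤ x}, a i

lemma summatory_eq_sum {E : Type*} [AddCommMonoid E] (a : ι → E) {x : ℝ}
    (hfin : {i | n i ≤ x}.Finite) : summatory n a x = ∑ i ∈ hfin.toFinset, a i :=
  finsum_mem_eq_finite_toFinset_sum _ hfin

variable {a : ι → ℝ}

/-- The generalized Dirichlet series `∑ a i * n i ^ (-s)`, with value `0` where it does not converge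
absolutely. -/
noncomputable def dirichletSeries (n a : ι → ℝ) (s : ℂ) : ℂ := ∑' i, a i * (n i : ℂ) ^ (-s)

lemma summatory_nonneg (ha : ∀ i, 0 ≤ a i) (x : ℝ) : 0 ≤ summatory n a x :=
  finsum_nonneg fun i => finsum_nonneg fun _ => ha i

lemma summatory_mono (hfin : ∀ x, {i | n i ≤ x}.Finite) (ha : ∀ i, 0 ≤ a i) :
    Monotone (summatory n a) := fun x y hxy => by
  rw [summatory_eq_sum a (hfin x), summatory_eq_sum a (hfin y)]
  refine Finset.sum_le_sum_of_subset_of_nonneg (fun i => ?_) fun i _ _ => ha i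
  simpa using fun hi => hi.trans hxy

lemma countable_of_finite_sublevel (hfin : ∀ x, {i | n i ≤ x}.Finite) : Countable ι := by
  have hcover : (Set.univ : Set ι) = ⋃ m : ℕ, {i | n i ≤ m} := by
    ext i
    simpa using exists_nat_ge (n i)
  rw [← Set.countable_univ_iff, hcover]
  exact Set.countable_iUnion fun m => (hfin m).countable

lemma tsum_indicator_Ici_eq_summatory {E : Type*} [AddCommMonoid E] [TopologicalSpace E]
    (a : ι → E) (hn : ∀ i, 0 < n i) (hfin : ∀ x, {i | n i ≤ x}.Finite) (u : ℝ) :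
    ∑' i, (Set.Ici (Real.log (n i))).indicator (fun _ => a i) u = summatory n a (Real.exp u) := by
  classical
  have hterm : ∀ i, (Set.Ici (Real.log (n i))).indicator (fun _ => a i) u =
      {i | n i ≤ Real.exp u}.indicator a i := fun i => by
    simp only [Set.indicator_apply, Set.mem_Ici, Set.mem_ofPred_eq, Real.log_le_iff_le_exp (hn i)]
  simp only [hterm]
  rw [summatory, finsum_mem_def, tsum_eq_finsum]
  exact (hfin _).subset Set.support_indicator_subset

lemma setIntegral_Ioi_indicator_Ici {E : Type*} [NormedAddCommGroup E] [NormedSpace ℝ E]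
    (g : ℝ → E) {a b : ℝ} (hab : a ≤ b) :
    ∫ u in Set.Ioi a, (Set.Ici b).indicator g u = ∫ u in Set.Ioi b, g u := by
  rw [setIntegral_congr_set Ioi_ae_eq_Ici, setIntegral_indicator measurableSet_Ici,
    setIntegral_congr_set (Ioi_ae_eq_Ici (a := b)), Set.inter_eq_right.2 (Set.Ici_subset_Ici.2 hab)]

lemma exp_neg_mul_log {x : ℝ} (hx : 0 < x) (w : ℂ) :
    Complex.exp (-w * Real.log x) = (x : ℂ) ^ (-w) := by
  rw [Complex.cpow_def_of_ne_zero (by exact_mod_cast hx.ne'), Complex.ofReal_log hx.le, mul_comm]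

lemma integral_summatory_exp (hn : ∀ i, 1 ≤ n i) (hfin : ∀ x, {i | n i ≤ x}.Finite) {w : ℂ}
    (hw : 0 < w.re) (hsum : Summable fun i => a i * n i ^ (-w.re)) :
    ∫ u in Set.Ioi (0 : ℝ), ((summatory n a (Real.exp u) : ℝ) : ℂ) * Complex.exp (-w * u) =
      dirichletSeries n a w / w := by
  have := countable_of_finite_sublevel hfin
  have hn0 : ∀ i, 0 < n i := fun i => one_pos.trans_le (hn i)
  have hν : ∀ i, 0 ≤ Real.log (n i) := fun i => Real.log_nonneg (hn i)
  let F : ι → ℝ → ℂ := fun i => (Set.Ici (Real.log (n i))).indicator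
    fun u => (a i : ℂ) * Complex.exp (-w * u)
  have hexp : ∀ c, IntegrableOn (fun u : ℝ => Complex.exp (-w * u)) (Set.Ioi c) :=
    integrableOn_exp_mul_complex_Ioi (by simpa using hw)
  have hFint : ∀ i, IntegrableOn (F i) (Set.Ioi 0) := fun i =>
    ((hexp 0).const_mul _).indicator measurableSet_Ici
  have hFI : ∀ i, ∫ u in Set.Ioi (0 : ℝ), F i u = a i * (n i : ℂ) ^ (-w) / w := fun i => by
    rw [setIntegral_Ioi_indicator_Ici _ (hν i), integral_const_mul,
      integral_exp_mul_complex_Ioi (by simpa using hw), exp_neg_mul_log (hn0 i), neg_div_neg_eq,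
      mul_div_assoc]
  have hFnorm : ∀ i, ∫ u in Set.Ioi (0 : ℝ), ‖F i u‖ = |a i * n i ^ (-w.re)| / w.re := fun i => by
    simp only [F, norm_indicator_eq_indicator_norm]
    rw [setIntegral_Ioi_indicator_Ici _ (hν i)]
    simp only [norm_mul, Complex.norm_exp, Complex.re_mul_ofReal, Complex.neg_re, Complex.norm_real]
    rw [integral_const_mul, integral_exp_mul_Ioi (by simpa using hw), neg_div_neg_eq,
      mul_comm (-w.re), ← Real.rpow_def_of_pos (hn0 i), abs_mul,
      abs_of_pos (Real.rpow_pos_of_pos (hn0 i) _), Real.norm_eq_abs, mul_div_assoc]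
  have htsum : ∀ u : ℝ, ∑' i, F i u = ((summatory n a (Real.exp u) : ℝ) : ℂ) *
      Complex.exp (-w * u) := fun u => by
    rw [← tsum_indicator_Ici_eq_summatory a hn0 hfin, Complex.ofReal_tsum, ← tsum_mul_right]
    congr! 2 with i
    by_cases hu : u ∈ Set.Ici (Real.log (n i)) <;> simp [F, hu]
  have hmain := integral_tsum_of_summable_integral_norm hFint
    (by simpa only [hFnorm] using hsum.abs.div_const _)
  simp only [hFI, htsum] at hmain
  rw [← hmain, tsum_div_const, dirichletSeries]

lemma integrableOn_summatory_exp (hfin : ∀ x, {i | n i ≤ x}.Finite) (ha : ∀ i, 0 ≤ a i) {B : ℝ}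
    (hB : ∀ x, 1 ≤ x → summatory n a x ≤ B * x) {w : ℂ} (hw : 1 < w.re) :
    IntegrableOn (fun u : ℝ => ((summatory n a (Real.exp u) : ℝ) : ℂ) * Complex.exp (-w * u))
      (Set.Ioi 0) := by
  have hmeas : Measurable fun u : ℝ => ((summatory n a (Real.exp u) : ℝ) : ℂ) :=
    Complex.measurable_ofReal.comp ((summatory_mono hfin ha).measurable.comp Real.measurable_exp)
  refine Integrable.mono' ((integrableOn_exp_mul_Ioi (a := 1 - w.re) (by linarith) 0).const_mul B)
    (by fun_prop) ((ae_restrict_mem measurableSet_Ioi).mono fun u hu => ?_)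
  rw [norm_mul, Complex.norm_exp, Complex.norm_real, Real.norm_of_nonneg (summatory_nonneg ha _)]
  calc _ ≤ B * Real.exp u * Real.exp (-w * u).re := by
        gcongr
        exact hB _ (Real.one_le_exp (le_of_lt hu))
    _ = _ := by
        rw [mul_assoc, ← Real.exp_add, Complex.re_mul_ofReal, Complex.neg_re]
        ring_nf

/-- The Wiener–Ikehara theorem. -/
theorem tendsto_summatory_div_self (hn : ∀ i, 1 ≤ n i) (hfin : ∀ x, {i | n i ≤ x}.Finite)
    (ha : ∀ i, 0 ≤ a i) {B : ℝ} (hB : ∀ x, 1 ≤ x → summatory n a x ≤ B * x)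
    (hsum : ∀ σ : ℝ, 1 < σ → Summable fun i => a i * n i ^ (-σ)) {F : ℂ → ℂ}
    (hF : ContinuousOn F {s | 1 ≤ s.re})
    (hFe : ∀ s : ℂ, 1 < s.re → dirichletSeries n a s = 1 / (s - 1) + F s) :
    Tendsto (fun x => summatory n a x / x) atTop (nhds 1) := by
  have hz1 : ∀ z : ℂ, 0 ≤ z.re → z + 1 ≠ 0 := fun z hz h => by
    have := congrArg Complex.re h
    simp at this
    linarith
  refine tendsto_div_self_of_laplace (G := fun z => (F (z + 1) - 1) / (z + 1))
    (summatory_mono hfin ha) (summatory_nonneg ha) hB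
    (((hF.comp (by fun_prop) fun z hz => ?_).sub continuousOn_const).div (by fun_prop) hz1)
    fun z hz => ?_
  · simpa using hz
  have hz0 : z ≠ 0 := fun h => by simp [h] at hz
  have hw : 1 < (z + 1).re := by simpa using hz
  have hexp : IntegrableOn (fun u : ℝ => Complex.exp (-z * u)) (Set.Ioi 0) :=
    integrableOn_exp_mul_complex_Ioi (by simpa using hz) 0
  have hθ := integrableOn_summatory_exp hfin ha hB hw
  have hsplit : ∀ u : ℝ, (((summatory n a (Real.exp u) / Real.exp u : ℝ) : ℂ) - 1) *
      Complex.exp (-z * u) = ((summatory n a (Real.exp u) : ℝ) : ℂ) * Complex.exp (-(z + 1) * u) -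
        Complex.exp (-z * u) := fun u => by
    rw [neg_add, add_mul, Complex.exp_add, neg_one_mul, Complex.exp_neg (u : ℂ)]
    push_cast
    ring
  simp only [hsplit]
  rw [integral_sub hθ hexp, integral_summatory_exp hn hfin (by linarith) (hsum _ hw), hFe _ hw,
    integral_exp_mul_complex_Ioi (by simpa using hz)]
  have := hz1 z hz.le
  simp only [Complex.ofReal_zero, mul_zero, Complex.exp_zero, add_sub_cancel_right]
  field_simp
  ring

end Summatory

section LatticeSum

open MeasureTheory Module

variable {E ι : Type*} [NormedAddCommGroup E] [NormedSpace ℝ E] [Fintype ι] (b : Basis ι ℝ E)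

lemma norm_floor_sub_le (x : E) : ‖(ZSpan.floor b x : E) - x‖ ≤ ∑ i, ‖b i‖ := by
  rw [norm_sub_rev, ← ZSpan.fract_apply]
  exact ZSpan.norm_fract_le b x

lemma floor_add_eq_of_mem_fundamentalDomain (a : Submodule.span ℤ (Set.range b)) {x : E}
    (hx : x ∈ ZSpan.fundamentalDomain b) : ZSpan.floor b (a + x) = a := by
  have h := ZSpan.fract_zSpan_add b x a.2
  rw [ZSpan.fract_eq_self.2 hx, ZSpan.fract_apply, sub_eq_iff_eq_add, add_comm x,
    add_right_cancel_iff] at h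
  exact Subtype.ext h.symm

variable {F : E → ℝ} {C : NNReal} {R : ℝ}

lemma norm_floor_smul_sub_le (hF : LipschitzWith C F) (hR : ∀ x, R < ‖x‖ → F x = 0) {t : ℝ}
    (ht : 1 ≤ t) (x : E) :
    ‖F (t⁻¹ • (ZSpan.floor b x : E)) - F (t⁻¹ • x)‖ ≤
      (Metric.closedBall 0 ((|R| + ∑ i, ‖b i‖) * t)).indicator
        (fun _ => C * (∑ i, ‖b i‖) * t⁻¹) x := by
  have t0 : 0 < t := one_pos.trans_le ht
  have hdist : ‖t⁻¹ • (ZSpan.floor b x : E) - t⁻¹ • x‖ ≤ (∑ i, ‖b i‖) * t⁻¹ := by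
    rw [← smul_sub, norm_smul, norm_inv, Real.norm_of_nonneg t0.le, mul_comm]
    gcongr
    exact norm_floor_sub_le b x
  by_cases hx : x ∈ Metric.closedBall (0 : E) ((|R| + ∑ i, ‖b i‖) * t)
  · rw [Set.indicator_of_mem hx, mul_assoc]
    exact (hF.norm_sub_le _ _).trans (by gcongr)
  have hfar : |R| + ∑ i, ‖b i‖ < ‖t⁻¹ • x‖ := by
    rw [mem_closedBall_zero_iff, not_le] at hx
    rwa [norm_smul, norm_inv, Real.norm_of_nonneg t0.le, inv_mul_eq_div, lt_div_iff₀ t0]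
  have hδ : 0 ≤ ∑ i, ‖b i‖ := Finset.sum_nonneg fun i _ => norm_nonneg _
  have hle : (∑ i, ‖b i‖) * t⁻¹ ≤ ∑ i, ‖b i‖ :=
    mul_le_of_le_one_right hδ (inv_le_one_of_one_le₀ ht)
  have htri := norm_sub_norm_le (t⁻¹ • x) (t⁻¹ • (ZSpan.floor b x : E))
  rw [norm_sub_rev] at htri
  have := le_abs_self R
  rw [Set.indicator_of_notMem hx, hR _ (by linarith), hR _ (by linarith), sub_zero, norm_zero]

variable [FiniteDimensional ℝ E] [MeasurableSpace E] [BorelSpace E]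

lemma measurable_comp_floor {α : Type*} [MeasurableSpace α] (g : E → α) :
    Measurable fun x => g (ZSpan.floor b x) := by
  have hcoord : Measurable fun x i => ⌊b.repr x i⌋ := measurable_pi_lambda _ fun i =>
    Int.measurable_floor.comp (b.coord i).continuous_of_finiteDimensional.measurable
  convert (measurable_of_countable fun m : ι → ℤ => g (∑ i, m i • b i)).comp hcoord using 3 with x
  simp [ZSpan.floor]

lemma integral_comp_floor (μ : Measure E) [μ.IsAddHaarMeasure] (g : E → ℝ)
    (hg : Integrable (fun x => g (ZSpan.floor b x)) μ) :
    ∫ x, g (ZSpan.floor b x) ∂μ =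
      μ.real (ZSpan.fundamentalDomain b) * ∑' a : Submodule.span ℤ (Set.range b), g a := by
  have : VAddInvariantMeasure (Submodule.span ℤ (Set.range b)) E μ :=
    inferInstanceAs (VAddInvariantMeasure (Submodule.span ℤ (Set.range b)).toAddSubgroup E μ)
  rw [(ZSpan.isAddFundamentalDomain b μ).integral_eq_tsum'' _ hg, ← tsum_mul_left]
  congr! 2 with a
  change ∫ x in _, g (ZSpan.floor b (a + x)) ∂μ = _
  rw [setIntegral_congr_fun (ZSpan.fundamentalDomain_measurableSet b) (g := fun _ => g a)
    fun x hx => congrArg (fun v : Submodule.span ℤ (Set.range b) => g v)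
      (floor_add_eq_of_mem_fundamentalDomain b a hx), setIntegral_const, smul_eq_mul]

lemma integrable_of_lipschitz (μ : Measure E) [IsFiniteMeasureOnCompacts μ] (hF : LipschitzWith C F)
    (hR : ∀ x, R < ‖x‖ → F x = 0) : Integrable F μ := by
  refine hF.continuous.integrable_of_hasCompactSupport
    (.of_support_subset_isCompact (isCompact_closedBall 0 R) fun x hx => ?_)
  by_contra h
  exact hx (hR x (by simpa using h))

theorem exists_abs_tsum_zspan_sub_le (μ : Measure E) [μ.IsAddHaarMeasure] (hF : LipschitzWith C F)
    (hR : ∀ x, R < ‖x‖ → F x = 0) :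
    ∃ C' : ℝ, ∀ t : ℝ, 1 ≤ t →
      |∑' a : Submodule.span ℤ (Set.range b), F (t⁻¹ • (a : E)) -
        (∫ x, F x ∂μ) / μ.real (ZSpan.fundamentalDomain b) * t ^ finrank ℝ E| ≤
          C' * (t ^ finrank ℝ E * t⁻¹) := by
  set δ := ∑ i, ‖b i‖
  have : 0 ≤ δ := Finset.sum_nonneg fun i _ => norm_nonneg _
  set V := μ.real (ZSpan.fundamentalDomain b)
  have hV : 0 < V := ENNReal.toReal_pos (ZSpan.measure_fundamentalDomain_ne_zero b)
    (ZSpan.fundamentalDomain_isBounded b).measure_lt_top.ne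
  refine ⟨C * δ * ((|R| + δ) ^ finrank ℝ E * μ.real (Metric.ball 0 1)) / V, fun t ht => ?_⟩
  have t0 : 0 < t := one_pos.trans_le ht
  have hscaled : Integrable (fun x => F (t⁻¹ • x)) μ :=
    (integrable_of_lipschitz μ hF hR).comp_smul (inv_ne_zero t0.ne')
  have hbound : Integrable ((Metric.closedBall (0 : E) ((|R| + δ) * t)).indicator
      fun _ => C * δ * t⁻¹) μ :=
    (integrable_indicator_iff measurableSet_closedBall).2
      (integrableOn_const measure_closedBall_lt_top.ne)
  have hclose := norm_floor_smul_sub_le b hF hR ht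
  have hfloor : Integrable (fun x => F (t⁻¹ • (ZSpan.floor b x : E))) μ := by
    have hdiff := hbound.mono'
      ((measurable_comp_floor b fun y => F (t⁻¹ • y)).aestronglyMeasurable.sub hscaled.1)
      (Eventually.of_forall hclose)
    simpa using hdiff.add hscaled
  have hint : |V * ∑' a : Submodule.span ℤ (Set.range b), F (t⁻¹ • (a : E)) -
      t ^ finrank ℝ E * ∫ x, F x ∂μ| ≤
        C * δ * ((|R| + δ) ^ finrank ℝ E * μ.real (Metric.ball 0 1)) * (t ^ finrank ℝ E * t⁻¹) := by
    rw [← integral_comp_floor b μ (fun y => F (t⁻¹ • y)) hfloor,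
      ← abs_of_pos (pow_pos t0 (finrank ℝ E)), ← smul_eq_mul |_|, ← Measure.integral_comp_inv_smul,
      ← integral_sub hfloor hscaled, ← Real.norm_eq_abs]
    refine (norm_integral_le_of_norm_le hbound (Eventually.of_forall hclose)).trans_eq ?_
    rw [integral_indicator measurableSet_closedBall, setIntegral_const, smul_eq_mul, Measure.real,
      Measure.addHaar_closedBall _ _ (by positivity), ENNReal.toReal_mul,
      ENNReal.toReal_ofReal (by positivity), ← Measure.real, abs_of_pos (pow_pos t0 _), mul_pow]
    ring
  rw [div_mul_eq_mul_div, div_mul_eq_mul_div, le_div_iff₀ hV, ← abs_of_pos hV, ← abs_mul,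
    abs_of_pos hV, sub_mul, div_mul_cancel₀ _ hV.ne', mul_comm _ V, mul_comm (∫ x, F x ∂μ)]
  exact hint

end LatticeSum

section Tent

open scoped NNReal

/-- The tent function, supported on `[-1, 1]`; its integer translates form a partition of unity. -/
noncomputable def tent (v : ℝ) : ℝ := max 0 (1 - |v|)

lemma tent_nonneg (v : ℝ) : 0 ≤ tent v := le_max_left _ _

lemma tent_le_one (v : ℝ) : tent v ≤ 1 := max_le zero_le_one (by linarith [abs_nonneg v])

lemma tent_eq_zero {v : ℝ} (hv : 1 ≤ |v|) : tent v = 0 := max_eq_left (by linarith)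

lemma abs_tent_sub_tent_le (u v : ℝ) : |tent u - tent v| ≤ |u - v| := by
  rw [tent, tent, max_comm 0, max_comm 0]
  refine (abs_max_sub_max_le_abs _ _ _).trans ?_
  rw [sub_sub_sub_cancel_left, abs_sub_comm u]
  exact abs_abs_sub_abs_le v u

lemma continuous_tent : Continuous tent := by
  unfold tent
  fun_prop

lemma sum_tent_add_int (v : ℝ) : ∑ e ∈ ({-⌊v⌋, -⌊v⌋ - 1} : Finset ℤ), tent (v + e) = 1 := by
  have h1 := Int.floor_le v
  have h2 := Int.lt_floor_add_one v
  rw [Finset.sum_pair (by omega), tent, tent]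
  push_cast
  rw [abs_of_nonneg (by linarith), abs_of_nonpos (by linarith), max_eq_right (by linarith),
    max_eq_right (by linarith)]
  ring

lemma tent_add_int_eq_zero {v : ℝ} {e : ℤ} (he : e ∉ ({-⌊v⌋, -⌊v⌋ - 1} : Finset ℤ)) :
    tent (v + e) = 0 := by
  have h1 := Int.floor_le v
  have h2 := Int.lt_floor_add_one v
  simp only [Finset.mem_insert, Finset.mem_singleton, not_or] at he
  rcases (by omega : e ≤ -⌊v⌋ - 2 ∨ -⌊v⌋ + 1 ≤ e) with h | h
  · have : (e : ℝ) ≤ -⌊v⌋ - 2 := by exact_mod_cast h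
    exact tent_eq_zero (le_abs.2 (.inr (by linarith)))
  · have : -(⌊v⌋ : ℝ) + 1 ≤ e := by exact_mod_cast h
    exact tent_eq_zero (le_abs.2 (.inl (by linarith)))

lemma hasSum_prod_tent_add_int {ι : Type*} [Fintype ι] (v : ι → ℝ) :
    HasSum (fun e : ι → ℤ => ∏ i, tent (v i + e i)) 1 := by
  classical
  have h := hasSum_sum_of_ne_finset_zero (L := .unconditional _)
    (f := fun e : ι → ℤ => ∏ i, tent (v i + e i))
    (s := Fintype.piFinset fun i => ({-⌊v i⌋, -⌊v i⌋ - 1} : Finset ℤ)) fun e he => by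
      obtain ⟨i, hi⟩ : ∃ i, e i ∉ ({-⌊v i⌋, -⌊v i⌋ - 1} : Finset ℤ) := by
        simpa only [Fintype.mem_piFinset, not_forall] using he
      exact Finset.prod_eq_zero (Finset.mem_univ i) (tent_add_int_eq_zero hi)
  rwa [← Finset.prod_univ_sum (fun i => ({-⌊v i⌋, -⌊v i⌋ - 1} : Finset ℤ))
    (fun i e => tent (v i + e)), Finset.prod_congr rfl fun i _ => sum_tent_add_int (v i),
    Finset.prod_const_one] at h

lemma abs_prod_tent_sub_prod_tent_le {ι : Type*} (s : Finset ι) (u v : ι → ℝ) :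
    |∏ i ∈ s, tent (u i) - ∏ i ∈ s, tent (v i)| ≤ ∑ i ∈ s, |u i - v i| := by
  classical
  induction s using Finset.induction_on with
  | empty => simp
  | insert i s hi ih =>
    have hprod : |∏ j ∈ s, tent (u j)| ≤ 1 := by
      rw [abs_of_nonneg (Finset.prod_nonneg fun j _ => tent_nonneg _)]
      exact Finset.prod_le_one (fun j _ => tent_nonneg _) fun j _ => tent_le_one _
    rw [Finset.prod_insert hi, Finset.prod_insert hi, Finset.sum_insert hi]
    calc _ = |(tent (u i) - tent (v i)) * ∏ j ∈ s, tent (u j) +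
          tent (v i) * (∏ j ∈ s, tent (u j) - ∏ j ∈ s, tent (v j))| := by ring_nf
      _ ≤ |tent (u i) - tent (v i)| * |∏ j ∈ s, tent (u j)| +
          |tent (v i)| * |∏ j ∈ s, tent (u j) - ∏ j ∈ s, tent (v j)| := by
        rw [← abs_mul, ← abs_mul]
        exact abs_add_le _ _
      _ ≤ |u i - v i| * 1 + 1 * ∑ j ∈ s, |u j - v j| := by
        have habs : |tent (v i)| ≤ 1 := (abs_of_nonneg (tent_nonneg _)).trans_le (tent_le_one _)
        exact add_le_add (mul_le_mul (abs_tent_sub_tent_le _ _) hprod (abs_nonneg _) (abs_nonneg _))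
          (mul_le_mul habs ih (abs_nonneg _) zero_le_one)
      _ = _ := by ring

lemma lipschitzWith_prod_tent {ι : Type*} [Fintype ι] :
    LipschitzWith (Fintype.card ι) fun v : ι → ℝ => ∏ i, tent (v i) :=
  LipschitzWith.of_dist_le_mul fun u v => by
    rw [Real.dist_eq, dist_eq_norm]
    refine (abs_prod_tent_sub_prod_tent_le _ u v).trans ?_
    calc ∑ i, |u i - v i| ≤ ∑ _i : ι, ‖u - v‖ :=
          Finset.sum_le_sum fun i _ => norm_le_pi_norm (u - v) i
      _ = _ := by simp

lemma exists_lipschitzWith_prod_tent_comp {V ι : Type*} [NormedAddCommGroup V] [NormedSpace ℝ V]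
    [FiniteDimensional ℝ V] [Fintype ι] (L : V →ₗ[ℝ] ι → ℝ) (hL : Function.Injective L) :
    ∃ (C : ℝ≥0) (R : ℝ), LipschitzWith C (fun v => ∏ i, tent (L v i)) ∧
      ∀ v, R < ‖v‖ → ∏ i, tent (L v i) = 0 := by
  obtain ⟨K, -, hK⟩ := L.injective_iff_antilipschitz.1 hL
  refine ⟨_, K, lipschitzWith_prod_tent.comp L.toContinuousLinearMap.lipschitz, fun v hv => ?_⟩
  have hnorm : ‖v‖ ≤ K * ‖L v‖ := by simpa using hK.le_mul_dist v 0
  obtain ⟨i, hi⟩ : ∃ i, 1 ≤ |L v i| := by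
    by_contra! hlt
    have h1 : ‖L v‖ ≤ 1 := (pi_norm_le_iff_of_nonneg zero_le_one).2 fun i => (hlt i).le
    exact (hv.trans_le hnorm).not_ge (mul_le_of_le_one_right K.coe_nonneg h1)
  exact Finset.prod_eq_zero (Finset.mem_univ i) (tent_eq_zero hi)

lemma lipschitzWith_log_max {r : ℝ≥0} (hr : 0 < r) :
    LipschitzWith r⁻¹ fun y : ℝ => Real.log (max y r) := by
  refine LipschitzWith.of_le_add_mul _ fun x y => ?_
  have hr' : (0 : ℝ) < r := hr
  have hx : 0 < max x (r : ℝ) := lt_max_of_lt_right hr'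
  have hy : 0 < max y (r : ℝ) := lt_max_of_lt_right hr'
  have hlog := Real.log_le_sub_one_of_pos (div_pos hx hy)
  rw [Real.log_div hx.ne' hy.ne', div_sub_one hy.ne', sub_le_iff_le_add'] at hlog
  refine hlog.trans (add_le_add_right ?_ _)
  rw [NNReal.coe_inv, inv_mul_eq_div]
  refine div_le_div₀ dist_nonneg ?_ hr' (le_max_right _ _)
  exact (le_abs_self _).trans (abs_max_sub_max_le_abs _ _ _)

end Tent

section Weight

open NumberField NumberField.InfinitePlace NumberField.Units NumberField.Units.dirichletUnitTheorem
  NumberField.mixedEmbedding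
open scoped NNReal Classical

variable (K : Type*) [Field K] [NumberField K]

/-- Linear coordinates on the logarithmic space `InfinitePlace K → ℝ`: the trace form, and the
coordinates of the trace-zero part in the basis of fundamental units. -/
noncomputable def logCoord : (InfinitePlace K → ℝ) →ₗ[ℝ] Option (Fin (rank K)) → ℝ :=
  let trace : (InfinitePlace K → ℝ) →ₗ[ℝ] ℝ :=
    ∑ w : InfinitePlace K, (mult w : ℝ) • LinearMap.proj w
  LinearMap.pi fun o => o.elim trace fun i =>
    ((basisUnitLattice K).ofZLatticeBasis ℝ (unitLattice K)).coord i ∘ₗ LinearMap.pi fun w =>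
      (mult w.1 : ℝ) • (LinearMap.proj w.1 - (Module.finrank ℚ K : ℝ)⁻¹ • trace)

lemma logCoord_none (v : InfinitePlace K → ℝ) : logCoord K v none = ∑ w, mult w * v w := by
  simp [logCoord]

lemma logCoord_some (v : InfinitePlace K → ℝ) (i : Fin (rank K)) :
    logCoord K v (some i) = ((basisUnitLattice K).ofZLatticeBasis ℝ (unitLattice K)).repr
      (fun w => mult w.1 * (v w.1 - (Module.finrank ℚ K : ℝ)⁻¹ * logCoord K v none)) i := by
  rw [logCoord_none]
  simp only [logCoord, LinearMap.pi_apply, Option.elim_some, LinearMap.comp_apply,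
    Module.Basis.coord_apply]
  congr! 2
  ext w
  simp

lemma logCoord_injective : Function.Injective (logCoord K) := by
  refine (injective_iff_map_eq_zero _).2 fun v hv => ?_
  have hsum : ∑ w, mult w * v w = 0 := by rw [← logCoord_none, hv, Pi.zero_apply]
  have hne : ∀ w ≠ w₀, v w = 0 := fun w hw => by
    have hrepr : ((basisUnitLattice K).ofZLatticeBasis ℝ (unitLattice K)).repr
        (fun w => mult w.1 * v w.1) = 0 := Finsupp.ext fun i => by
      simpa [logCoord_none, hsum, hv] using (logCoord_some K v i).symm
    simpa using congrFun ((LinearEquiv.map_eq_zero_iff _).1 hrepr) ⟨w, hw⟩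
  rw [Finset.sum_eq_single w₀ (fun w _ hw => by rw [hne w hw, mul_zero]) (by simp)] at hsum
  funext w
  by_cases hw : w = w₀
  · simpa [hw] using hsum
  · exact hne w hw

variable {K} in
lemma sum_mult_log_normAtPlace {x : mixedSpace K} (hx : mixedEmbedding.norm x ≠ 0) :
    ∑ w, mult w * Real.log (normAtPlace w x) = Real.log (mixedEmbedding.norm x) := by
  rw [mixedEmbedding.norm_apply, Real.log_prod fun w _ =>
    pow_ne_zero _ (mixedEmbedding.norm_ne_zero_iff.1 hx w)]
  simp

/-- A Lipschitz weight on the mixed space, a product of tents in the logarithmic coordinates of `x`.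
Summing it over the orbit of `x` under the units smooths the indicator function of `{N x ≈ 1}`.
The case split overrides the junk value `Real.log 0 = 0`. -/
noncomputable def weight (x : mixedSpace K) : ℝ :=
  if mixedEmbedding.norm x = 0 then 0 else
    ∏ o, tent (logCoord K (fun w => Real.log (normAtPlace w x)) o)

lemma weight_nonneg (x : mixedSpace K) : 0 ≤ weight K x := by
  unfold weight
  split_ifs
  exacts [le_rfl, Finset.prod_nonneg fun _ _ => tent_nonneg _]

variable {K} in
lemma weight_eq {x : mixedSpace K} (hx : mixedEmbedding.norm x ≠ 0) :
    weight K x = tent (Real.log (mixedEmbedding.norm x)) *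
      ∏ i, tent (((basisUnitLattice K).ofZLatticeBasis ℝ (unitLattice K)).repr (logMap x) i) := by
  have hlogMap : logMap x = fun w => mult w.1 * (Real.log (normAtPlace w.1 x) -
      (Module.finrank ℚ K : ℝ)⁻¹ * Real.log (mixedEmbedding.norm x)) := by
    ext w
    rw [logMap_apply, mul_comm (Real.log (mixedEmbedding.norm x))]
  rw [weight, if_neg hx, Fintype.prod_option, hlogMap]
  simp only [logCoord_some, logCoord_none, sum_mult_log_normAtPlace hx]

-- The logarithms are truncated below at `-r`, where the weight already vanishes.
lemma weight_eq_prod_tent_log_max {R r : ℝ} (hRr : R < r)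
    (hR : ∀ v, R < ‖v‖ → ∏ o, tent (logCoord K v o) = 0) (x : mixedSpace K) :
    weight K x = ∏ o, tent (logCoord K
      (fun w => Real.log (max (normAtPlace w x) (Real.exp (-r)))) o) := by
  by_cases hall : ∀ w, Real.exp (-r) ≤ normAtPlace w x
  · have hx := mixedEmbedding.norm_ne_zero_iff.2 fun w => ((Real.exp_pos _).trans_le (hall w)).ne'
    simp only [weight, if_neg hx, max_eq_left (hall _)]
  obtain ⟨w, hw⟩ : ∃ w, normAtPlace w x < Real.exp (-r) := by simpa using hall
  have hlarge : ∀ v : InfinitePlace K → ℝ, v w ≤ -r → ∏ o, tent (logCoord K v o) = 0 :=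
    fun v hv => hR v <| hRr.trans_le <| le_trans (le_trans (le_neg_of_le_neg hv) (neg_le_abs _))
      (norm_le_pi_norm v w)
  rw [hlarge _ (by simp [max_eq_right hw.le]), weight]
  split_ifs with hx
  · rfl
  refine hlarge _ ((Real.log_le_iff_le_exp ?_).2 hw.le)
  exact (normAtPlace_nonneg w x).lt_of_ne' (mixedEmbedding.norm_ne_zero_iff.1 hx w)

lemma normAtPlace_le_norm (w : InfinitePlace K) (x : mixedSpace K) : normAtPlace w x ≤ ‖x‖ := by
  rw [norm_eq_sup'_normAtPlace]
  exact Finset.le_sup' (fun w => normAtPlace w x) (Finset.mem_univ w)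

lemma lipschitzWith_normAtPlace (w : InfinitePlace K) :
    LipschitzWith 1 (normAtPlace w : mixedSpace K → ℝ) := LipschitzWith.of_le_add fun x y => by
  calc normAtPlace w x = normAtPlace w (y + (x - y)) := by rw [add_sub_cancel]
    _ ≤ normAtPlace w y + normAtPlace w (x - y) := normAtPlace_add_le w _ _
    _ ≤ normAtPlace w y + dist x y := by
      rw [dist_eq_norm]
      exact add_le_add_right (normAtPlace_le_norm K w _) _

theorem exists_lipschitzWith_weight :
    ∃ (C : ℝ≥0) (R : ℝ), LipschitzWith C (weight K) ∧ ∀ x, R < ‖x‖ → weight K x = 0 := by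
  obtain ⟨C, R, hC, hR⟩ := exists_lipschitzWith_prod_tent_comp (logCoord K) (logCoord_injective K)
  set r := |R| + 1
  have hRr : R < r := by linarith [le_abs_self R]
  have hweight := weight_eq_prod_tent_log_max K hRr hR
  let ρ : ℝ≥0 := ⟨Real.exp (-r), (Real.exp_pos _).le⟩
  have hlog : LipschitzWith (ρ⁻¹ * 1) fun (x : mixedSpace K) w =>
      Real.log (max (normAtPlace w x) ρ) := LipschitzWith.of_dist_le_mul fun x y =>
    (dist_pi_le_iff (by positivity)).2 fun w =>
      ((lipschitzWith_log_max (Real.exp_pos _)).comp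
        (lipschitzWith_normAtPlace K w)).dist_le_mul x y
  refine ⟨C * (ρ⁻¹ * 1), Real.exp r, ?_, fun x hx => ?_⟩
  · rw [funext hweight]
    exact hC.comp hlog
  · rw [norm_eq_sup'_normAtPlace, Finset.lt_sup'_iff] at hx
    obtain ⟨w, -, hw⟩ := hx
    rw [hweight]
    refine hR _ (hRr.trans_le (le_trans ?_ (norm_le_pi_norm _ w)))
    refine le_trans ?_ (le_abs_self _)
    rw [Real.le_log_iff_exp_le (by positivity)]
    exact hw.le.trans (le_max_left _ _)

end Weight

section SmoothCount

variable {ι : Type*} {n : ι → ℝ}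

/-- The smoothed count of the indices `i` with `n i` near `x`, on a logarithmic scale. -/
noncomputable def smoothCount (n : ι → ℝ) (x : ℝ) : ℝ := ∑' i, tent (Real.log (n i / x))

lemma smoothCount_nonneg (x : ℝ) : 0 ≤ smoothCount n x := tsum_nonneg fun _ => tent_nonneg _

lemma tent_log_div_eq_zero {a x : ℝ} (hx : 0 < x) (h : Real.exp 1 * x < a) :
    tent (Real.log (a / x)) = 0 :=
  tent_eq_zero <| ((Real.le_log_iff_exp_le (div_pos ((by positivity : (0 : ℝ) < _).trans h) hx)).2
    ((le_div_iff₀ hx).2 h.le)).trans (le_abs_self _)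

lemma summable_tent_log_div (hfin : ∀ x, {i | n i ≤ x}.Finite) {x : ℝ} (hx : 0 < x) :
    Summable fun i => tent (Real.log (n i / x)) :=
  summable_of_hasFiniteSupport <| (hfin (Real.exp 1 * x)).subset fun _ hi =>
    not_lt.1 fun hlt => hi (tent_log_div_eq_zero hx hlt)

end SmoothCount

section IdealCount

open NumberField NumberField.InfinitePlace NumberField.Units NumberField.Units.dirichletUnitTheorem
  NumberField.mixedEmbedding
open scoped nonZeroDivisors Classical

lemma exists_generators_bijOn {R : Type*} [CommRing R] [IsDedekindDomain R] (J : (Ideal R)⁰) :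
    ∃ g : {I : (Ideal R)⁰ // ClassGroup.mk0 I = (ClassGroup.mk0 J)⁻¹} → R,
      (∀ I, Ideal.span {g I} = (J * I.1 : (Ideal R)⁰)) ∧
      Set.BijOn (fun p : _ × Rˣ => (p.2 * g p.1 : R)) Set.univ {a | a ∈ (J : Ideal R) ∧ a ≠ 0} := by
  have hprincipal : ∀ I : {I : (Ideal R)⁰ // ClassGroup.mk0 I = (ClassGroup.mk0 J)⁻¹},
      ∃ a : R, Ideal.span {a} = (J * I.1 : (Ideal R)⁰) := by
    rintro ⟨I, hI⟩
    have hone : ClassGroup.mk0 (J * I) = 1 := by rw [map_mul, hI, mul_inv_cancel]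
    obtain ⟨a, ha⟩ := ((ClassGroup.mk0_eq_one_iff (J * I).2).1 hone).principal
    exact ⟨a, ha.symm⟩
  choose g hg using hprincipal
  have hg0 : ∀ I, g I ≠ 0 := fun I h0 => nonZeroDivisors.coe_ne_zero (J * I.1) <| by
    rw [← hg, h0, Ideal.span_singleton_eq_bot.2 rfl, Ideal.zero_eq_bot]
  refine ⟨g, hg, ?_, ?_, ?_⟩
  · rintro ⟨I, u⟩ -
    refine ⟨Ideal.mul_mem_left _ _ ?_, mul_ne_zero u.ne_zero (hg0 I)⟩
    have hmem : g I ∈ (J : Ideal R) * (I.1 : Ideal R) := by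
      rw [← Submonoid.coe_mul, ← hg]
      exact Ideal.mem_span_singleton_self _
    exact Ideal.mul_le_left hmem
  · rintro ⟨I, u⟩ - ⟨I', u'⟩ - h
    replace h : (u * g I : R) = u' * g I' := h
    have hspan : (J * I.1 : (Ideal R)⁰) = J * I'.1 := Subtype.ext <| by
      rw [← hg, ← hg, ← Ideal.span_singleton_mul_left_unit u.isUnit, h,
        Ideal.span_singleton_mul_left_unit u'.isUnit]
    obtain rfl : I = I' := Subtype.ext (mul_left_cancel hspan)
    rw [Units.ext (mul_right_cancel₀ (hg0 I) h)]
  · rintro a ⟨haJ, ha0⟩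
    have hspan : Ideal.span {a} ∈ (Ideal R)⁰ := by simpa [mem_nonZeroDivisors_iff_ne_zero] using ha0
    obtain ⟨I, hI⟩ := Ideal.dvd_span_singleton.2 haJ
    have hI0 : I ∈ (Ideal R)⁰ := (mul_mem_nonZeroDivisors.1 (hI ▸ hspan)).2
    have hmul : J * ⟨I, hI0⟩ = ⟨Ideal.span {a}, hspan⟩ := Subtype.ext hI.symm
    have hclass : ClassGroup.mk0 ⟨I, hI0⟩ = (ClassGroup.mk0 J)⁻¹ := by
      rw [eq_inv_iff_mul_eq_one, mul_comm, ← map_mul, hmul, ClassGroup.mk0_eq_one_iff]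
      exact ⟨a, rfl⟩
    obtain ⟨u, hu⟩ := Ideal.span_singleton_eq_span_singleton.1
      ((hg ⟨_, hclass⟩).trans (congrArg Subtype.val hmul))
    exact ⟨(⟨_, hclass⟩, u), trivial, by rw [← hu, mul_comm]⟩

variable {K : Type*} [Field K] [NumberField K]

/-- The absolute norm of a nonzero ideal, as a real number. -/
noncomputable def idealNorm (I : (Ideal (𝓞 K))⁰) : ℝ := Ideal.absNorm (I : Ideal (𝓞 K))

lemma one_le_idealNorm (I : (Ideal (𝓞 K))⁰) : 1 ≤ idealNorm I := by
  unfold idealNorm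
  exact_mod_cast Nat.one_le_iff_ne_zero.2 (Ideal.absNorm_ne_zero_of_nonZeroDivisors I)

lemma idealNorm_pos (I : (Ideal (𝓞 K))⁰) : 0 < idealNorm I := one_pos.trans_le (one_le_idealNorm I)

lemma idealNorm_mul (I J : (Ideal (𝓞 K))⁰) : idealNorm (I * J) = idealNorm I * idealNorm J := by
  simp [idealNorm]

variable (K) in
lemma finite_idealNorm_le (x : ℝ) : {I : (Ideal (𝓞 K))⁰ | idealNorm I ≤ x}.Finite :=
  ((Ideal.finite_setOfPred_absNorm_le (S := 𝓞 K) ⌊x⌋₊).preimage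
    Subtype.val_injective.injOn).subset fun _ hI => Nat.le_floor hI

lemma norm_mixedEmbedding (a : 𝓞 K) :
    mixedEmbedding.norm (mixedEmbedding K (a : K)) = Ideal.absNorm (Ideal.span {a}) := by
  rw [mixedEmbedding.norm_eq_norm, Ideal.absNorm_span_singleton, ← Algebra.coe_norm_int,
    Nat.cast_natAbs]
  push_cast
  rfl

lemma bijective_torsion_mul_fundSystem : Function.Bijective
    fun p : torsion K × (Fin (rank K) → ℤ) => (p.1 * ∏ i, fundSystem K i ^ p.2 i : (𝓞 K)ˣ) := by
  rw [Function.bijective_iff_existsUnique]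
  intro u
  obtain ⟨p, hp, hunique⟩ := exist_unique_eq_mul_prod K u
  exact ⟨p, hp.symm, fun q hq => hunique q hq.symm⟩

lemma logEmbedding_torsion_mul_fundSystem (ζ : torsion K) (e : Fin (rank K) → ℤ) :
    logEmbedding K (Additive.ofMul (ζ * ∏ i, fundSystem K i ^ e i)) =
      ∑ i, (e i : ℝ) • (basisUnitLattice K).ofZLatticeBasis ℝ (unitLattice K) i := by
  rw [ofMul_mul, map_add, logEmbedding_eq_zero_iff.2 ζ.2, zero_add, ofMul_prod, map_sum]
  refine Finset.sum_congr rfl fun i _ => ?_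
  rw [ofMul_zpow, map_zsmul, logEmbedding_fundSystem, Module.Basis.ofZLatticeBasis_apply,
    Int.cast_smul_eq_zsmul]

lemma hasSum_comp_snd {T α : Type*} [Fintype T] {f : α → ℝ} {a : ℝ} (hf : HasSum f a)
    (hf0 : ∀ i, 0 ≤ f i) : HasSum (fun p : T × α => f p.2) (Fintype.card T * a) := by
  have hone : HasSum (fun _ : T => (1 : ℝ)) (Fintype.card T) := by
    simpa using hasSum_fintype fun _ : T => (1 : ℝ)
  simpa using hone.mul hf (hone.summable.mul_of_nonneg hf.summable (fun _ => zero_le_one) hf0)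

lemma hasSum_weight_unit_smul {x : mixedSpace K} (hx : mixedEmbedding.norm x ≠ 0) :
    HasSum (fun u : (𝓞 K)ˣ => weight K (u • x))
      (torsionOrder K * tent (Real.log (mixedEmbedding.norm x))) := by
  let B := (basisUnitLattice K).ofZLatticeBasis ℝ (unitLattice K)
  have : Fintype (torsion K) := Fintype.ofFinite _
  have hterm (p : torsion K × (Fin (rank K) → ℤ)) :
      weight K ((p.1 * ∏ i, fundSystem K i ^ p.2 i : (𝓞 K)ˣ) • x) =
        tent (Real.log (mixedEmbedding.norm x)) * ∏ i, tent (B.repr (logMap x) i + p.2 i) := by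
    rw [weight_eq (by rwa [norm_unit_smul]), norm_unit_smul, logMap_unit_smul _ hx,
      logEmbedding_torsion_mul_fundSystem]
    simp only [map_add, Finsupp.add_apply, Module.Basis.repr_sum_self, B, add_comm]
  rw [← (Equiv.ofBijective _ bijective_torsion_mul_fundSystem).hasSum_iff, torsionOrder,
    Nat.card_eq_fintype_card]
  simp only [Function.comp_def, Equiv.ofBijective_apply, hterm]
  simpa [mul_comm, mul_left_comm] using (hasSum_comp_snd (T := torsion K)
    (hasSum_prod_tent_add_int fun i => B.repr (logMap x) i)
    (fun _ => Finset.prod_nonneg fun _ _ => tent_nonneg _)).mul_left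
      (tent (Real.log (mixedEmbedding.norm x)))

/-- The ideal `J`, seen as a lattice in the mixed space. -/
noncomputable abbrev idealLattice (J : (Ideal (𝓞 K))⁰) : Submodule ℤ (mixedSpace K) :=
  Submodule.span ℤ (Set.range (fractionalIdealLatticeBasis K (FractionalIdeal.mk0 K J)))

lemma mem_idealLattice {J : (Ideal (𝓞 K))⁰} {x : mixedSpace K} :
    x ∈ idealLattice J ↔ ∃ a ∈ (J : Ideal (𝓞 K)), mixedEmbedding K (a : K) = x := by
  rw [mem_span_fractionalIdealLatticeBasis]
  simp [FractionalIdeal.coe_mk0, FractionalIdeal.mem_coeIdeal]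

lemma hasSum_weight_smul_unit_mul {a : 𝓞 K} (ha : a ≠ 0) {t : ℝ} (ht : 0 < t) :
    HasSum (fun v : (𝓞 K)ˣ => weight K (t⁻¹ • mixedEmbedding K ((v * a : 𝓞 K) : K)))
      (torsionOrder K *
        tent (Real.log (Ideal.absNorm (Ideal.span {a}) / t ^ Module.finrank ℚ K))) := by
  have hnorm : mixedEmbedding.norm (t⁻¹ • mixedEmbedding K (a : K)) =
      Ideal.absNorm (Ideal.span {a}) / t ^ Module.finrank ℚ K := by
    rw [mixedEmbedding.norm_smul, norm_mixedEmbedding, abs_of_pos (inv_pos.2 ht), inv_pow,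
      mul_comm, div_eq_mul_inv]
  have hne : mixedEmbedding.norm (t⁻¹ • mixedEmbedding K (a : K)) ≠ 0 := by
    rw [hnorm]
    have : Ideal.absNorm (Ideal.span {a}) ≠ 0 := by simpa [Ideal.absNorm_eq_zero_iff] using ha
    positivity
  convert hasSum_weight_unit_smul hne using 3 with v
  · rw [unitSMul_smul, mul_smul_comm, ← map_mul]
    simp
  · rw [hnorm]

theorem tsum_weight_idealLattice (J : (Ideal (𝓞 K))⁰) {t x : ℝ} (ht : 0 < t) (hx : 0 < x)
    (htx : t ^ Module.finrank ℚ K = idealNorm J * x) :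
    ∑' a : idealLattice J, weight K (t⁻¹ • (a : mixedSpace K)) =
      torsionOrder K * ∑' I : {I : (Ideal (𝓞 K))⁰ // ClassGroup.mk0 I = (ClassGroup.mk0 J)⁻¹},
        tent (Real.log (idealNorm I.1 / x)) := by
  obtain ⟨g, hspan, hmaps, hinj, hsurj⟩ := exists_generators_bijOn J
  let Ψ (p : {I : (Ideal (𝓞 K))⁰ // ClassGroup.mk0 I = (ClassGroup.mk0 J)⁻¹} × (𝓞 K)ˣ) :
      idealLattice J := ⟨mixedEmbedding K ((p.2 * g p.1 : 𝓞 K) : K),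
        mem_idealLattice.2 ⟨_, (hmaps (Set.mem_univ p)).1, rfl⟩⟩
  have hΨinj : Function.Injective Ψ := fun p q h => hinj trivial trivial <|
    RingOfIntegers.ext (mixedEmbedding_injective K (congrArg Subtype.val h))
  have hΨrange : Function.support (fun a : idealLattice J =>
      weight K (t⁻¹ • (a : mixedSpace K))) ⊆ Set.range Ψ := by
    rintro ⟨y, hy⟩ hne
    obtain ⟨a, haJ, rfl⟩ := mem_idealLattice.1 hy
    have ha0 : a ≠ 0 := by
      rintro rfl
      simp [weight] at hne
    obtain ⟨p, -, hp⟩ := hsurj ⟨haJ, ha0⟩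
    exact ⟨p, Subtype.ext (congrArg (fun b : 𝓞 K => mixedEmbedding K (b : K)) hp)⟩
  have hfiber (I) : HasSum (fun v : (𝓞 K)ˣ => weight K (t⁻¹ • (Ψ (I, v) : mixedSpace K)))
      (torsionOrder K * tent (Real.log (idealNorm I.1 / x))) := by
    convert hasSum_weight_smul_unit_mul (a := g I) (fun h => (hmaps (Set.mem_univ (I, 1))).2 ?_) ht
      using 3
    · rw [hspan, ← idealNorm, idealNorm_mul, htx, mul_div_mul_left _ _ (idealNorm_pos J).ne']
    · simp [h]
  have hsummable : Summable fun p => weight K (t⁻¹ • (Ψ p : mixedSpace K)) := by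
    refine (summable_prod_of_nonneg fun _ => weight_nonneg K _).2
      ⟨fun I => (hfiber I).summable, ?_⟩
    simp only [(hfiber _).tsum_eq]
    exact ((summable_tent_log_div (finite_idealNorm_le K) hx).comp_injective
      Subtype.val_injective).mul_left _
  rw [← hΨinj.tsum_eq hΨrange, hsummable.tsum_prod' fun I => (hfiber I).summable, ← tsum_mul_left]
  exact tsum_congr fun I => (hfiber I).tsum_eq

variable (K) in
lemma integral_weight_pos : 0 < ∫ x, weight K x := by
  obtain ⟨C, R, hC, hR⟩ := exists_lipschitzWith_weight K
  refine MeasureTheory.integral_pos_of_integrable_nonneg_nonzero hC.continuous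
    (integrable_of_lipschitz _ hC hR) (weight_nonneg K) (x := 1) ?_
  rw [weight_eq (by simp), map_one, Real.log_one, logMap_one]
  simp [tent]

lemma exists_abs_tsum_weight_sub_le (J : (Ideal (𝓞 K))⁰) :
    ∃ c A : ℝ, 0 < c ∧ 0 ≤ A ∧ ∀ t : ℝ, 1 ≤ t →
      |∑' a : idealLattice J, weight K (t⁻¹ • (a : mixedSpace K)) - c * t ^ Module.finrank ℚ K| ≤
        A * (t ^ Module.finrank ℚ K * t⁻¹) := by
  obtain ⟨C, R, hC, hR⟩ := exists_lipschitzWith_weight K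
  let b := fractionalIdealLatticeBasis K (FractionalIdeal.mk0 K J)
  obtain ⟨A, hA⟩ := exists_abs_tsum_zspan_sub_le b MeasureTheory.volume hC hR
  rw [mixedEmbedding.finrank] at hA
  have hcovol : 0 < MeasureTheory.volume.real (ZSpan.fundamentalDomain b) :=
    ENNReal.toReal_pos (ZSpan.measure_fundamentalDomain_ne_zero b)
      (ZSpan.fundamentalDomain_isBounded b).measure_lt_top.ne
  refine ⟨_, |A|, div_pos (integral_weight_pos K) hcovol, abs_nonneg A, fun t ht => ?_⟩
  have : 0 < t := by linarith
  exact (hA t ht).trans (mul_le_mul_of_nonneg_right (le_abs_self A) (by positivity))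

lemma exists_abs_tsum_class_sub_le (𝒞 : ClassGroup (𝓞 K)) :
    ∃ c A : ℝ, 0 < c ∧ ∀ x : ℝ, 1 ≤ x →
      |(∑' I : {I : (Ideal (𝓞 K))⁰ // ClassGroup.mk0 I = 𝒞}, tent (Real.log (idealNorm I.1 / x))) -
        c * x| ≤ A * x ^ (1 - (Module.finrank ℚ K : ℝ)⁻¹) := by
  obtain ⟨J, hJ⟩ := ClassGroup.mk0_surjective 𝒞⁻¹
  obtain rfl : 𝒞 = (ClassGroup.mk0 J)⁻¹ := by rw [hJ, inv_inv]
  obtain ⟨c, A, hc, hA0, hA⟩ := exists_abs_tsum_weight_sub_le J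
  set d := Module.finrank ℚ K
  have hd0 : d ≠ 0 := Module.finrank_pos.ne'
  have hw : (0 : ℝ) < torsionOrder K := mod_cast Nat.pos_of_ne_zero (torsionOrder_ne_zero K)
  have hJ0 : 0 < idealNorm J := idealNorm_pos J
  refine ⟨(torsionOrder K : ℝ)⁻¹ * c * idealNorm J, (torsionOrder K : ℝ)⁻¹ * A * idealNorm J,
    by positivity, fun x hx => ?_⟩
  have hx0 : 0 < x := one_pos.trans_le hx
  set t := (idealNorm J * x) ^ (d : ℝ)⁻¹
  have hbase : 1 ≤ idealNorm J * x := one_le_mul_of_one_le_of_one_le (one_le_idealNorm J) hx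
  have ht1 : 1 ≤ t := Real.one_le_rpow hbase (by positivity)
  have htd : t ^ d = idealNorm J * x := Real.rpow_inv_natCast_pow (by linarith) hd0
  have htinv : t⁻¹ ≤ x ^ (-(d : ℝ)⁻¹) := by
    rw [Real.rpow_neg hx0.le]
    exact inv_anti₀ (by positivity) <| Real.rpow_le_rpow hx0.le
      (le_mul_of_one_le_left hx0.le (one_le_idealNorm J)) (by positivity)
  have hlattice := hA t ht1
  rw [tsum_weight_idealLattice J (one_pos.trans_le ht1) hx0 htd, htd] at hlattice
  set S := ∑' I : {I : (Ideal (𝓞 K))⁰ // ClassGroup.mk0 I = (ClassGroup.mk0 J)⁻¹},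
    tent (Real.log (idealNorm I.1 / x))
  calc _ = (torsionOrder K : ℝ)⁻¹ * |torsionOrder K * S - c * (idealNorm J * x)| := by
        rw [← abs_of_pos (inv_pos.2 hw), ← abs_mul, abs_of_pos (inv_pos.2 hw)]
        congr 1
        field_simp
    _ ≤ (torsionOrder K : ℝ)⁻¹ * (A * (idealNorm J * x * x ^ (-(d : ℝ)⁻¹))) := by
        gcongr
        refine hlattice.trans ?_
        gcongr
    _ = _ := by
        rw [sub_eq_add_neg, Real.rpow_add hx0, Real.rpow_one]
        ring

variable (K) in
theorem exists_abs_smoothCount_idealNorm_sub_le : ∃ c A : ℝ, 0 < c ∧ ∀ x : ℝ, 1 ≤ x →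
    |smoothCount (idealNorm (K := K)) x - c * x| ≤
      A * x ^ (1 - (Module.finrank ℚ K : ℝ)⁻¹) := by
  choose c A hc hA using exists_abs_tsum_class_sub_le (K := K)
  refine ⟨∑ 𝒞, c 𝒞, ∑ 𝒞, A 𝒞, Finset.sum_pos (fun 𝒞 _ => hc 𝒞) Finset.univ_nonempty,
    fun x hx => ?_⟩
  let e := Equiv.sigmaFiberEquiv fun I : (Ideal (𝓞 K))⁰ => ClassGroup.mk0 I
  have hsummable := summable_tent_log_div (finite_idealNorm_le K) (one_pos.trans_le hx)
  have hsum : smoothCount (idealNorm (K := K)) x =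
      ∑ 𝒞, ∑' I : {I : (Ideal (𝓞 K))⁰ // ClassGroup.mk0 I = 𝒞},
        tent (Real.log (idealNorm I.1 / x)) :=
    (e.tsum_eq _).symm.trans ((e.summable_iff.2 hsummable).tsum_sigma.trans (tsum_fintype _))
  rw [hsum, Finset.sum_mul, Finset.sum_mul, ← Finset.sum_sub_distrib]
  exact (Finset.abs_sum_le_sum_abs _ _).trans (Finset.sum_le_sum fun 𝒞 _ => hA 𝒞 x hx)

end IdealCount

section MellinTransform

open MeasureTheory Topology Asymptotics

lemma tent_log_eq_zero_of_le {t : ℝ} (ht : t ≤ Real.exp (-1)) (ht0 : 0 < t) :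
    tent (Real.log t) = 0 :=
  tent_eq_zero <| le_abs.2 <| Or.inr <| by linarith [(Real.log_le_iff_le_exp ht0).2 ht]

lemma tent_log_eq_zero_of_ge {t : ℝ} (ht : Real.exp 1 ≤ t) : tent (Real.log t) = 0 :=
  tent_eq_zero <| le_abs.2 <| Or.inl <| (Real.le_log_iff_exp_le ((Real.exp_pos 1).trans_le ht)).2 ht

lemma continuousOn_tent_log : ContinuousOn (fun t => tent (Real.log t)) (Set.Ioi 0) :=
  continuous_tent.comp_continuousOn (Real.continuousOn_log.mono fun _ ht => ht.ne')

lemma tent_log_eventuallyEq_zero : (fun t => (tent (Real.log t) : ℂ)) =ᶠ[𝓝[>] 0] 0 := by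
  filter_upwards [Ioc_mem_nhdsGT (Real.exp_pos (-1))] with t ht
  simp [tent_log_eq_zero_of_le ht.2 ht.1]

lemma tent_log_eventuallyEq_zero_atTop : (fun t => (tent (Real.log t) : ℂ)) =ᶠ[atTop] 0 := by
  filter_upwards [eventually_ge_atTop (Real.exp 1)] with t ht
  simp [tent_log_eq_zero_of_ge ht]

lemma locallyIntegrableOn_tent_log :
    LocallyIntegrableOn (fun t => (tent (Real.log t) : ℂ)) (Set.Ioi 0) :=
  (Complex.continuous_ofReal.comp_continuousOn continuousOn_tent_log).locallyIntegrableOn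
    measurableSet_Ioi

/-- The Mellin transform of `tent ∘ log`. -/
noncomputable def tentMellin (s : ℂ) : ℂ := mellin (fun t => (tent (Real.log t) : ℂ)) s

lemma mellinConvergent_tent_log (s : ℂ) : MellinConvergent (fun t => (tent (Real.log t) : ℂ)) s :=
  mellinConvergent_of_isBigO_rpow (a := s.re + 1) (b := s.re - 1) locallyIntegrableOn_tent_log
    (tent_log_eventuallyEq_zero_atTop.trans_isBigO (isBigO_zero _ _)) (by linarith)
    (tent_log_eventuallyEq_zero.trans_isBigO (isBigO_zero _ _)) (by linarith)

lemma differentiable_tentMellin : Differentiable ℂ tentMellin := fun s =>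
  mellin_differentiableAt_of_isBigO_rpow (a := s.re + 1) (b := s.re - 1)
    locallyIntegrableOn_tent_log
    (tent_log_eventuallyEq_zero_atTop.trans_isBigO (isBigO_zero _ _)) (by linarith)
    (tent_log_eventuallyEq_zero.trans_isBigO (isBigO_zero _ _)) (by linarith)

lemma integral_cpow_mul_one_add_mul_log {s : ℂ} (hs : s ≠ 0) (ε : ℝ) {a b : ℝ} (ha : 0 < a)
    (hb : 0 < b) : ∫ t in a..b, (t : ℂ) ^ (s - 1) * (1 + ε * Real.log t : ℝ) =
      (b : ℂ) ^ s * ((1 + ε * Real.log b : ℝ) / s - ε / s ^ 2) -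
        (a : ℂ) ^ s * ((1 + ε * Real.log a : ℝ) / s - ε / s ^ 2) := by
  have hpos : ∀ t ∈ Set.uIcc a b, 0 < t := fun t ht => (lt_min ha hb).trans_le ht.1
  refine intervalIntegral.integral_eq_sub_of_hasDerivAt
    (f := fun t : ℝ => (t : ℂ) ^ s * ((1 + ε * Real.log t : ℝ) / s - ε / s ^ 2))
    (fun t ht => ?_) (ContinuousOn.intervalIntegrable fun t ht => ?_)
  · have ht0 : (t : ℂ) ≠ 0 := Complex.ofReal_ne_zero.2 (hpos t ht).ne'
    have hlog := ((((Real.hasDerivAt_log (hpos t ht).ne').const_mul ε).const_add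
      1).ofReal_comp.div_const s).sub_const ((ε : ℂ) / s ^ 2)
    refine ((hasDerivAt_ofReal_cpow_const (hpos t ht).ne' hs).mul hlog).congr_deriv ?_
    rw [Complex.cpow_sub _ _ ht0, Complex.cpow_one]
    push_cast
    field_simp
    ring
  · have := hpos t ht
    have hlog := Real.continuousAt_log this.ne'
    have hcpow := Complex.continuousAt_ofReal_cpow_const t (s - 1) (Or.inr this.ne')
    refine ContinuousAt.continuousWithinAt ?_
    fun_prop

lemma tentMellin_eq_intervalIntegral (s : ℂ) : tentMellin s =
    (∫ t in Real.exp (-1)..1, (t : ℂ) ^ (s - 1) * tent (Real.log t)) +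
      ∫ t in 1..Real.exp 1, (t : ℂ) ^ (s - 1) * tent (Real.log t) := by
  have hint : ∀ a b : ℝ, 0 < a → a ≤ b → IntervalIntegrable
      (fun t : ℝ => (t : ℂ) ^ (s - 1) * tent (Real.log t)) volume a b := fun a b ha hab =>
    (intervalIntegrable_iff_integrableOn_Ioc_of_le hab).2
      ((mellinConvergent_tent_log s).mono_set fun t ht => ha.trans ht.1)
  rw [intervalIntegral.integral_add_adjacent_intervals
      (hint _ _ (Real.exp_pos _) (Real.exp_le_one_iff.2 (by norm_num)))
      (hint _ _ one_pos (Real.one_le_exp zero_le_one)),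
    intervalIntegral.integral_of_le (Real.exp_le_exp.2 (by norm_num))]
  refine setIntegral_eq_of_subset_of_forall_sdiff_eq_zero measurableSet_Ioi
    (fun t ht => (Real.exp_pos _).trans ht.1) fun t ht => ?_
  rcases le_or_gt t (Real.exp (-1)) with hle | hgt
  · simp [tent_log_eq_zero_of_le hle ht.1]
  · have : Real.exp 1 < t := not_le.1 fun hle => ht.2 ⟨hgt, hle⟩
    simp [tent_log_eq_zero_of_ge this.le]

lemma tent_log_of_le_one {t : ℝ} (ht : Real.exp (-1) ≤ t) (ht1 : t ≤ 1) :
    tent (Real.log t) = 1 + (1 : ℝ) * Real.log t := by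
  have ht0 := (Real.exp_pos _).trans_le ht
  have := (Real.le_log_iff_exp_le ht0).2 ht
  rw [tent, abs_of_nonpos (Real.log_nonpos ht0.le ht1), max_eq_right (by linarith)]
  ring

lemma tent_log_of_one_le {t : ℝ} (ht1 : 1 ≤ t) (ht : t ≤ Real.exp 1) :
    tent (Real.log t) = 1 + (-1 : ℝ) * Real.log t := by
  have := (Real.log_le_iff_le_exp (one_pos.trans_le ht1)).2 ht
  rw [tent, abs_of_nonneg (Real.log_nonneg ht1), max_eq_right (by linarith)]
  ring

lemma tentMellin_eq {s : ℂ} (hs : s ≠ 0) :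
    tentMellin s = Complex.exp s * ((1 - Complex.exp (-s)) / s) ^ 2 := by
  have hexp : ∀ x : ℝ, ((Real.exp x : ℝ) : ℂ) ^ s = Complex.exp (x * s) := fun x => by
    rw [Complex.cpow_def_of_ne_zero (Complex.ofReal_ne_zero.2 (Real.exp_ne_zero x)),
      ← Complex.ofReal_log (Real.exp_pos x).le, Real.log_exp]
  have hleft : ∫ t in Real.exp (-1)..1, (t : ℂ) ^ (s - 1) * tent (Real.log t) =
      ∫ t in Real.exp (-1)..1, (t : ℂ) ^ (s - 1) * (1 + (1 : ℝ) * Real.log t : ℝ) := by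
    refine intervalIntegral.integral_congr fun t ht => ?_
    rw [Set.uIcc_of_le (Real.exp_le_one_iff.2 (by norm_num))] at ht
    simp only [tent_log_of_le_one ht.1 ht.2]
  have hright : ∫ t in 1..Real.exp 1, (t : ℂ) ^ (s - 1) * tent (Real.log t) =
      ∫ t in 1..Real.exp 1, (t : ℂ) ^ (s - 1) * (1 + (-1 : ℝ) * Real.log t : ℝ) := by
    refine intervalIntegral.integral_congr fun t ht => ?_
    rw [Set.uIcc_of_le (Real.one_le_exp zero_le_one)] at ht
    simp only [tent_log_of_one_le ht.1 ht.2]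
  rw [tentMellin_eq_intervalIntegral, hleft, hright,
    integral_cpow_mul_one_add_mul_log hs _ (Real.exp_pos _) one_pos,
    integral_cpow_mul_one_add_mul_log hs _ one_pos (Real.exp_pos _)]
  simp only [hexp, Real.log_exp, Real.log_one]
  push_cast
  simp only [Complex.one_cpow, neg_mul, one_mul, Complex.exp_neg]
  field_simp [Complex.exp_ne_zero s]
  ring

lemma tentMellin_ne_zero {s : ℂ} (hs : 0 < s.re) : tentMellin s ≠ 0 := by
  have hs0 : s ≠ 0 := fun h => by simp [h] at hs
  have hne : Complex.exp (-s) ≠ 1 := fun h => by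
    have := congrArg norm h
    rw [Complex.norm_exp, norm_one, Real.exp_eq_one_iff, Complex.neg_re] at this
    linarith
  rw [tentMellin_eq hs0]
  exact mul_ne_zero (Complex.exp_ne_zero s)
    (pow_ne_zero 2 (div_ne_zero (sub_ne_zero.2 hne.symm) hs0))

end MellinTransform

section Continuation

open MeasureTheory Topology Asymptotics

variable {ι : Type*} {n : ι → ℝ}

lemma continuousOn_smoothCount (hn : ∀ i, 0 < n i) (hfin : ∀ x, {i | n i ≤ x}.Finite) :
    ContinuousOn (smoothCount n) (Set.Ioi 0) := fun x hx => by
  have hlocal : smoothCount n =ᶠ[𝓝 x]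
      fun y => ∑ i ∈ (hfin (Real.exp 1 * (x + 1))).toFinset, tent (Real.log (n i / y)) := by
    filter_upwards [Ioo_mem_nhds (show (0 : ℝ) < x from hx) (lt_add_one x)] with y hy
    refine tsum_eq_sum fun i hi => tent_log_div_eq_zero hy.1 ?_
    have : Real.exp 1 * (x + 1) < n i := by simpa using hi
    nlinarith [Real.exp_pos 1, hy.2]
  refine (ContinuousAt.congr ?_ hlocal.symm).continuousWithinAt
  refine tendsto_finsetSum _ fun i _ => continuous_tent.continuousAt.comp ?_
  exact (continuousAt_const.div continuousAt_id (ne_of_gt hx)).log (div_pos (hn i) hx).ne'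

lemma locallyIntegrableOn_smoothCount_inv (hn : ∀ i, 0 < n i)
    (hfin : ∀ x, {i | n i ≤ x}.Finite) :
    LocallyIntegrableOn (fun t => (smoothCount n t⁻¹ : ℂ)) (Set.Ioi 0) :=
  (Complex.continuous_ofReal.comp_continuousOn <| (continuousOn_smoothCount hn hfin).comp
    (continuousOn_inv₀.mono fun _ ht => ne_of_gt ht)
    fun _ ht => Set.mem_Ioi.2 (inv_pos.2 ht)).locallyIntegrableOn measurableSet_Ioi

lemma smoothCount_inv_eventuallyEq_zero (hn : ∀ i, 1 ≤ n i) :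
    (fun t => (smoothCount n t⁻¹ : ℂ)) =ᶠ[atTop] 0 := by
  filter_upwards [eventually_gt_atTop (Real.exp 1)] with t ht
  have ht0 := (Real.exp_pos 1).trans ht
  have hlt : Real.exp 1 * t⁻¹ < 1 := by rwa [← div_eq_mul_inv, div_lt_one ht0]
  have hzero : ∀ i, tent (Real.log (n i / t⁻¹)) = 0 := fun i =>
    tent_log_div_eq_zero (inv_pos.2 ht0) (hlt.trans_le (hn i))
  simp only [smoothCount, hzero, tsum_zero, Complex.ofReal_zero, Pi.zero_apply]

lemma hasMellin_tent_log_mul {a : ℝ} (ha : 0 < a) (s : ℂ) :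
    HasMellin (fun t => (tent (Real.log (a * t)) : ℂ)) s ((a : ℂ) ^ (-s) * tentMellin s) :=
  ⟨(MellinConvergent.comp_mul_left ha).2 (mellinConvergent_tent_log s),
    mellin_comp_mul_left (fun t => (tent (Real.log t) : ℂ)) s ha⟩

lemma summable_integral_norm_tent (hn : ∀ i, 0 < n i) (hfin : ∀ x, {i | n i ≤ x}.Finite) {s : ℂ}
    (hs : MellinConvergent (fun t => (smoothCount n t⁻¹ : ℂ)) s) :
    Summable fun i => ∫ t in Set.Ioi (0 : ℝ),
      ‖(t : ℂ) ^ (s - 1) • (tent (Real.log (n i * t)) : ℂ)‖ := by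
  refine summable_of_sum_le (fun i => integral_nonneg fun t => norm_nonneg _)
    (c := ∫ t in Set.Ioi (0 : ℝ), ‖(t : ℂ) ^ (s - 1) • (smoothCount n t⁻¹ : ℂ)‖) fun S => ?_
  have hint : ∀ i ∈ S, Integrable
      (fun t : ℝ => ‖(t : ℂ) ^ (s - 1) • (tent (Real.log (n i * t)) : ℂ)‖)
      (volume.restrict (Set.Ioi 0)) := fun i _ => (hasMellin_tent_log_mul (hn i) s).1.norm
  rw [← integral_finsetSum S hint]
  refine setIntegral_mono_on (integrable_finsetSum S hint) hs.norm measurableSet_Ioi fun t ht => ?_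
  simp only [norm_smul, Complex.norm_real, Real.norm_of_nonneg (tent_nonneg _),
    Real.norm_of_nonneg (smoothCount_nonneg _), ← Finset.mul_sum]
  gcongr
  simpa only [smoothCount, div_inv_eq_mul] using
    (summable_tent_log_div hfin (inv_pos.2 ht)).sum_le_tsum S
    fun i _ => tent_nonneg _

lemma hasSum_cpow_neg (hn : ∀ i, 0 < n i) (hfin : ∀ x, {i | n i ≤ x}.Finite) {s : ℂ}
    (hs0 : 0 < s.re) (hs : MellinConvergent (fun t => (smoothCount n t⁻¹ : ℂ)) s) :
    HasSum (fun i => (n i : ℂ) ^ (-s))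
      (mellin (fun t => (smoothCount n t⁻¹ : ℂ)) s / tentMellin s) := by
  have := countable_of_finite_sublevel hfin
  have hsum := hasSum_integral_of_summable_integral_norm
    (fun i => (hasMellin_tent_log_mul (hn i) s).1) (summable_integral_norm_tent hn hfin hs)
  have hterm : ∀ i, ∫ t in Set.Ioi (0 : ℝ), (t : ℂ) ^ (s - 1) • (tent (Real.log (n i * t)) : ℂ) =
      (n i : ℂ) ^ (-s) * tentMellin s := fun i => (hasMellin_tent_log_mul (hn i) s).2
  have htsum : ∫ t in Set.Ioi (0 : ℝ),
      ∑' i, (t : ℂ) ^ (s - 1) • (tent (Real.log (n i * t)) : ℂ) =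
        mellin (fun t => (smoothCount n t⁻¹ : ℂ)) s := by
    simp only [mellin, smoothCount, div_inv_eq_mul, Complex.ofReal_tsum, smul_eq_mul, tsum_mul_left]
  simp only [hterm, htsum] at hsum
  simpa only [mul_div_cancel_right₀ _ (tentMellin_ne_zero hs0)] using hsum.div_const (tentMellin s)

variable {A c θ : ℝ}

/-- The error term of the asymptotic `smoothCount n t⁻¹ ∼ c / t` at `0`. The main term is cut off at
`t = 1`, so that the Mellin transform of the error term converges to the left of `1`. -/
noncomputable def smoothRemainder (n : ι → ℝ) (c : ℝ) (t : ℝ) : ℂ :=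
  smoothCount n t⁻¹ - (Set.Ioc 0 1).indicator (fun t : ℝ => (t : ℂ) ^ (-1 : ℂ)) t * c

lemma smoothRemainder_isBigO (h : ∀ x, 1 ≤ x → |smoothCount n x - c * x| ≤ A * x ^ θ) :
    smoothRemainder n c =O[𝓝[>] 0] fun t => t ^ (-θ) := by
  refine IsBigO.of_bound A ?_
  filter_upwards [Ioc_mem_nhdsGT one_pos] with t ht
  have ht' := h t⁻¹ ((one_le_inv₀ ht.1).2 ht.2)
  rw [Real.norm_of_nonneg (Real.rpow_nonneg ht.1.le _), Real.rpow_neg ht.1.le,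
    ← Real.inv_rpow ht.1.le]
  refine le_trans (le_of_eq ?_) ht'
  rw [smoothRemainder, Set.indicator_of_mem ht, Complex.cpow_neg_one, ← Complex.ofReal_inv,
    ← Complex.ofReal_mul, ← Complex.ofReal_sub, Complex.norm_real, Real.norm_eq_abs, mul_comm]

lemma smoothRemainder_eventuallyEq_zero (hn : ∀ i, 1 ≤ n i) (c : ℝ) :
    smoothRemainder n c =ᶠ[atTop] 0 := by
  filter_upwards [smoothCount_inv_eventuallyEq_zero hn, eventually_gt_atTop 1] with t ht ht1
  simp [smoothRemainder, ht, ht1]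

lemma locallyIntegrableOn_smoothRemainder (hn : ∀ i, 0 < n i) (hfin : ∀ x, {i | n i ≤ x}.Finite)
    (c : ℝ) : LocallyIntegrableOn (smoothRemainder n c) (Set.Ioi 0) := by
  have hpole : LocallyIntegrableOn (fun t : ℝ => (t : ℂ) ^ (-1 : ℂ)) (Set.Ioi 0) :=
    ContinuousOn.locallyIntegrableOn (fun t ht => (Complex.continuousAt_ofReal_cpow_const t _
      (Or.inr (ne_of_gt ht))).continuousWithinAt) measurableSet_Ioi
  refine (locallyIntegrableOn_smoothCount_inv hn hfin).sub fun t ht => ?_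
  obtain ⟨u, hu, hint⟩ := hpole t ht
  exact ⟨u, hu, (hint.indicator measurableSet_Ioc).mul_const _⟩

lemma differentiableAt_mellin_smoothRemainder (hn : ∀ i, 1 ≤ n i)
    (hfin : ∀ x, {i | n i ≤ x}.Finite)
    (h : ∀ x, 1 ≤ x → |smoothCount n x - c * x| ≤ A * x ^ θ) {s : ℂ} (hs : θ < s.re) :
    DifferentiableAt ℂ (mellin (smoothRemainder n c)) s :=
  mellin_differentiableAt_of_isBigO_rpow (a := s.re + 1)
    (locallyIntegrableOn_smoothRemainder (fun i => one_pos.trans_le (hn i)) hfin c)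
    ((smoothRemainder_eventuallyEq_zero hn c).trans_isBigO (isBigO_zero _ _))
    (lt_add_one _) (smoothRemainder_isBigO h) hs

lemma hasMellin_smoothCount_inv (hn : ∀ i, 1 ≤ n i) (hfin : ∀ x, {i | n i ≤ x}.Finite)
    (hθ : θ < 1) (h : ∀ x, 1 ≤ x → |smoothCount n x - c * x| ≤ A * x ^ θ) {s : ℂ}
    (hs : 1 < s.re) :
    HasMellin (fun t => (smoothCount n t⁻¹ : ℂ)) s
      (mellin (smoothRemainder n c) s + 1 / (s - 1) * c) := by
  have hrem : MellinConvergent (smoothRemainder n c) s :=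
    mellinConvergent_of_isBigO_rpow (a := s.re + 1)
      (locallyIntegrableOn_smoothRemainder (fun i => one_pos.trans_le (hn i)) hfin c)
      ((smoothRemainder_eventuallyEq_zero hn c).trans_isBigO (isBigO_zero _ _))
      (lt_add_one _) (smoothRemainder_isBigO h) (hθ.trans hs)
  have hpole := hasMellin_cpow_Ioc (-1) (s := s) (by simpa using hs)
  have hsum := hasMellin_add hrem (hpole.1.const_smul (c : ℂ))
  rw [mellin_const_smul, hpole.2, ← sub_eq_add_neg, smul_eq_mul, mul_comm (c : ℂ)] at hsum
  convert hsum using 2 with t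
  simp [smoothRemainder, mul_comm]

theorem exists_hasSum_cpow_neg (hn : ∀ i, 1 ≤ n i) (hfin : ∀ x, {i | n i ≤ x}.Finite)
    (hθ0 : 0 ≤ θ) (hθ : θ < 1) (h : ∀ x, 1 ≤ x → |smoothCount n x - c * x| ≤ A * x ^ θ) :
    ∃ Y : ℂ → ℂ, (∀ s, θ < s.re → DifferentiableAt ℂ Y s) ∧ Y 1 = c / tentMellin 1 ∧
      ∀ s, 1 < s.re → HasSum (fun i => (n i : ℂ) ^ (-s)) (Y s / (s - 1)) := by
  refine ⟨fun s => ((s - 1) * mellin (smoothRemainder n c) s + c) / tentMellin s,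
    fun s hs => ?_, by simp, fun s hs => ?_⟩
  · have hrem := differentiableAt_mellin_smoothRemainder hn hfin h hs
    exact (((differentiableAt_id.sub_const 1).mul hrem).add_const _).div
      differentiable_tentMellin.differentiableAt (tentMellin_ne_zero (hθ0.trans_lt hs))
  · have hmellin := hasMellin_smoothCount_inv hn hfin hθ h hs
    have hs1 : s - 1 ≠ 0 := fun hs1 => by simp [sub_eq_zero.1 hs1] at hs
    convert hasSum_cpow_neg (fun i => one_pos.trans_le (hn i)) hfin (one_pos.trans hs) hmellin.1
      using 1
    rw [hmellin.2]
    field_simp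

end Continuation

section DirichletSeries

open Topology

variable {ι : Type*} {n a : ι → ℝ} {Y : ℂ → ℂ} {θ : ℝ}

lemma norm_mul_cpow_neg {x r : ℝ} (hx : 0 < x) (hr : 0 ≤ r) (s : ℂ) :
    ‖(r : ℂ) * (x : ℂ) ^ (-s)‖ = r * x ^ (-s.re) := by
  rw [norm_mul, Complex.norm_of_nonneg hr, Complex.norm_cpow_eq_rpow_re_of_pos hx, Complex.neg_re]

lemma summable_norm_dirichletSeries (hn : ∀ i, 0 < n i) (ha : ∀ i, 0 ≤ a i) {s : ℂ}
    (hs : Summable fun i => a i * n i ^ (-s.re)) :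
    Summable fun i => ‖(a i : ℂ) * (n i : ℂ) ^ (-s)‖ := by
  simpa only [norm_mul_cpow_neg (hn _) (ha _)] using hs

lemma summable_log_mul_rpow_neg (hn : ∀ i, 1 ≤ n i) (ha : ∀ i, 0 ≤ a i)
    (hsum : ∀ σ : ℝ, 1 < σ → Summable fun i => a i * n i ^ (-σ)) {σ : ℝ} (hσ : 1 < σ) :
    Summable fun i => a i * Real.log (n i) * n i ^ (-σ) := by
  obtain ⟨τ, hτ, hτσ⟩ := exists_between hσ
  refine .of_nonneg_of_le (fun i => ?_) (fun i => ?_) ((hsum τ hτ).div_const (σ - τ))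
  · have := Real.log_nonneg (hn i)
    have := Real.rpow_nonneg (zero_le_one.trans (hn i)) (-σ)
    have := ha i
    positivity
  have hn0 := one_pos.trans_le (hn i)
  calc a i * Real.log (n i) * n i ^ (-σ)
      ≤ a i * (n i ^ (σ - τ) / (σ - τ)) * n i ^ (-σ) := by
        gcongr
        · exact ha i
        · exact Real.log_le_rpow_div hn0.le (sub_pos.2 hτσ)
    _ = a i * (n i ^ (σ - τ) * n i ^ (-σ)) / (σ - τ) := by ring
    _ = a i * n i ^ (-τ) / (σ - τ) := by rw [← Real.rpow_add hn0]; ring_nf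

lemma deriv_dirichletSeries (hn : ∀ i, 1 ≤ n i) (ha : ∀ i, 0 ≤ a i)
    (hsum : ∀ σ : ℝ, 1 < σ → Summable fun i => a i * n i ^ (-σ)) {s : ℂ} (hs : 1 < s.re) :
    deriv (dirichletSeries n a) s = -dirichletSeries n (fun i => a i * Real.log (n i)) s := by
  obtain ⟨σ, hσ, hσs⟩ := exists_between hs
  have hn0 : ∀ i, 0 < n i := fun i => one_pos.trans_le (hn i)
  have hderiv : ∀ i z, HasDerivAt (fun z : ℂ => (a i : ℂ) * (n i : ℂ) ^ (-z))
      (-((a i * Real.log (n i) : ℝ) * (n i : ℂ) ^ (-z))) z := fun i z => by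
    have h := ((hasDerivAt_neg z).const_cpow (c := n i)
      (.inl (Complex.ofReal_ne_zero.2 (hn0 i).ne'))).const_mul (a i : ℂ)
    refine h.congr_deriv ?_
    rw [← Complex.ofReal_log (hn0 i).le]
    push_cast
    ring
  have h := Complex.hasSum_deriv_of_summable_norm (U := {z : ℂ | σ < z.re}) (hsum σ hσ)
    (fun i z _ => (hderiv i z).differentiableAt.differentiableWithinAt)
    (isOpen_lt continuous_const Complex.continuous_re) (fun i z hz => ?_) hσs
  · simp only [(hderiv _ _).deriv] at h
    rw [dirichletSeries, ← tsum_neg]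
    exact h.tsum_eq.symm
  rw [norm_mul_cpow_neg (hn0 i) (ha i)]
  exact mul_le_mul_of_nonneg_left
    (Real.rpow_le_rpow_of_exponent_le (hn i) (neg_le_neg (le_of_lt hz))) (ha i)

lemma hasSum_re_dirichletSeries (hn : ∀ i, 0 < n i) (ha : ∀ i, 0 ≤ a i) {σ : ℝ}
    (hsum : Summable fun i => a i * n i ^ (-σ)) (t : ℝ) :
    HasSum (fun i => a i * n i ^ (-σ) * Real.cos (t * Real.log (n i)))
      (dirichletSeries n a ⟨σ, t⟩).re := by
  have h := Complex.hasSum_re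
    (summable_norm_dirichletSeries (s := ⟨σ, t⟩) hn ha hsum).of_norm.hasSum
  refine h.congr_fun fun i => ?_
  rw [← exp_neg_mul_log (hn i), Complex.re_ofReal_mul, Complex.exp_re, Complex.re_mul_ofReal,
    Complex.im_mul_ofReal, Complex.neg_re, Complex.neg_im, neg_mul t, Real.cos_neg,
    Real.rpow_def_of_pos (hn i)]
  ring_nf

/-- `3 + 4 cos x + cos 2x = 2 (1 + cos x)²`. -/
lemma three_four_one_dirichletSeries_nonneg (hn : ∀ i, 0 < n i) (ha : ∀ i, 0 ≤ a i) {σ : ℝ}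
    (hsum : Summable fun i => a i * n i ^ (-σ)) (t : ℝ) :
    0 ≤ 3 * (dirichletSeries n a ⟨σ, 0⟩).re + 4 * (dirichletSeries n a ⟨σ, t⟩).re +
      (dirichletSeries n a ⟨σ, 2 * t⟩).re := by
  have h := hasSum_re_dirichletSeries hn ha hsum
  refine (((h 0).mul_left 3).add ((h t).mul_left 4) |>.add (h (2 * t))).nonneg fun i => ?_
  have hcoef : 0 ≤ a i * n i ^ (-σ) := mul_nonneg (ha i) (Real.rpow_nonneg (hn i).le _)
  rw [zero_mul, Real.cos_zero, mul_assoc 2 t, Real.cos_two_mul]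
  calc 0 ≤ 2 * (a i * n i ^ (-σ)) * (1 + Real.cos (t * Real.log (n i))) ^ 2 := by positivity
    _ = _ := by ring

lemma tendsto_sub_mul_logDeriv {f : ℂ → ℂ} {s : ℂ} (hf : AnalyticAt ℂ f s)
    (h : analyticOrderAt f s ≠ ⊤) :
    Tendsto (fun z => (z - s) * logDeriv f z) (𝓝[≠] s) (𝓝 (analyticOrderNatAt f s)) := by
  obtain ⟨g, hg, hgs, hfg⟩ := (hf.analyticOrderNatAt_eq_iff h).1 rfl
  set m := analyticOrderNatAt f s
  have hlim : Tendsto (fun z => (m : ℂ) + (z - s) * logDeriv g z) (𝓝[≠] s)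
      (𝓝 (m + (s - s) * logDeriv g s)) := by
    have hcont : ContinuousAt (logDeriv g) s := hg.deriv.continuousAt.div hg.continuousAt hgs
    exact Tendsto.mono_left (ContinuousAt.tendsto (by fun_prop)) nhdsWithin_le_nhds
  rw [sub_self, zero_mul, add_zero] at hlim
  refine hlim.congr' ?_
  filter_upwards [logDeriv_congr_nhdsNE (hfg.filter_mono nhdsWithin_le_nhds), self_mem_nhdsWithin,
    nhdsWithin_le_nhds (hg.continuousAt.eventually_ne hgs),
    nhdsWithin_le_nhds hg.eventually_analyticAt] with z hz hzs hgz hgz'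
  have hzs : z - s ≠ 0 := sub_ne_zero.2 hzs
  simp only [smul_eq_mul] at hz
  rw [hz, logDeriv_mul (f := fun x => (x - s) ^ m) z (pow_ne_zero _ hzs) hgz (by fun_prop)
    hgz'.differentiableAt, logDeriv_fun_pow (by fun_prop), logDeriv_apply (· - s),
    deriv_sub_const, deriv_id'']
  field_simp

lemma tendsto_sub_mul_one_div_sub_one (s : ℂ) :
    Tendsto (fun z => (z - s) * (1 / (z - 1))) (𝓝[≠] s) (𝓝 (if s = 1 then 1 else 0)) := by
  split_ifs with hs
  · subst hs
    refine tendsto_const_nhds.congr' ?_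
    filter_upwards [self_mem_nhdsWithin] with z hz
    exact (mul_one_div_cancel (sub_ne_zero.2 hz)).symm
  · have hs : s - 1 ≠ 0 := sub_ne_zero.2 hs
    have : ContinuousAt (fun z => (z - s) * (1 / (z - 1))) s := by fun_prop (disch := assumption)
    simpa only [sub_self, zero_mul] using this.tendsto.mono_left nhdsWithin_le_nhds

lemma tendsto_mk_add_nhdsNE (σ t : ℝ) :
    Tendsto (fun ε : ℝ => (⟨σ + ε, t⟩ : ℂ)) (𝓝[>] 0) (𝓝[≠] ⟨σ, t⟩) := by
  have hmk : (fun ε : ℝ => (⟨σ + ε, t⟩ : ℂ)) = fun ε : ℝ => (⟨σ, t⟩ + ε : ℂ) := by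
    funext ε
    apply Complex.ext <;> simp
  refine tendsto_nhdsWithin_of_tendsto_nhds_of_eventually_within _ ?_ ?_
  · have : ContinuousAt (fun ε : ℝ => (⟨σ, t⟩ : ℂ) + ε) 0 := by fun_prop
    simpa [hmk] using this.tendsto.mono_left nhdsWithin_le_nhds
  · filter_upwards [self_mem_nhdsWithin] with ε hε
    simpa using (ne_of_gt hε : ε ≠ 0)

lemma tendsto_mul_re_of_deriv_eq {D : ℂ → ℂ} {σ t : ℝ} (hσ : 1 ≤ σ)
    (hY : AnalyticAt ℂ Y ⟨σ, t⟩) (hord : analyticOrderAt Y ⟨σ, t⟩ ≠ ⊤)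
    (hD : ∀ s : ℂ, 1 < s.re → deriv Y s = Y s * (1 / (s - 1) - D s)) :
    Tendsto (fun ε : ℝ => ε * (D ⟨σ + ε, t⟩).re) (𝓝[>] 0)
      (𝓝 ((if (⟨σ, t⟩ : ℂ) = 1 then 1 else 0) - analyticOrderNatAt Y ⟨σ, t⟩)) := by
  have hmk := tendsto_mk_add_nhdsNE σ t
  have hlim := (Complex.continuous_re.tendsto _).comp <|
    ((tendsto_sub_mul_one_div_sub_one ⟨σ, t⟩).sub (tendsto_sub_mul_logDeriv hY hord)).comp hmk
  have hne : ∀ᶠ z in 𝓝[≠] (⟨σ, t⟩ : ℂ), Y z ≠ 0 :=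
    hY.eventually_eq_zero_or_eventually_ne_zero.resolve_left fun h =>
      hord (analyticOrderAt_eq_top.2 h)
  rw [Complex.sub_re, Complex.natCast_re, apply_ite Complex.re, Complex.one_re,
    Complex.zero_re] at hlim
  refine hlim.congr' ?_
  filter_upwards [hmk.eventually hne, self_mem_nhdsWithin] with ε hYε (hε : 0 < ε)
  have hsub : (⟨σ + ε, t⟩ : ℂ) - ⟨σ, t⟩ = ε := by apply Complex.ext <;> simp
  simp only [Function.comp_apply, hsub]
  rw [logDeriv_apply, hD _ (show 1 < σ + ε by linarith), mul_div_cancel_left₀ _ hYε, ← mul_sub,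
    sub_sub_cancel, Complex.re_ofReal_mul]

/-- De la Vallée-Poussin's argument, run at every point `σ + it ≠ 1` with `σ ≥ 1`, so that the
region of absolute convergence needs no separate treatment. -/
theorem ne_zero_of_deriv_eq_mul_dirichletSeries (hn : ∀ i, 0 < n i) (ha : ∀ i, 0 ≤ a i)
    (hsum : ∀ σ : ℝ, 1 < σ → Summable fun i => a i * n i ^ (-σ)) (hθ : θ < 1)
    (hY : ∀ s : ℂ, θ < s.re → DifferentiableAt ℂ Y s) (hY1 : Y 1 ≠ 0)
    (hD : ∀ s : ℂ, 1 < s.re → deriv Y s = Y s * (1 / (s - 1) - dirichletSeries n a s))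
    {s : ℂ} (hs : 1 ≤ s.re) : Y s ≠ 0 := by
  have han : AnalyticOnNhd ℂ Y {s | θ < s.re} :=
    DifferentiableOn.analyticOnNhd (fun z hz => (hY z hz).differentiableWithinAt)
      (isOpen_lt continuous_const Complex.continuous_re)
  have hord : ∀ z : ℂ, 1 ≤ z.re → analyticOrderAt Y z ≠ ⊤ := fun z hz =>
    han.analyticOrderAt_ne_top_of_isPreconnected (convex_halfSpace_re_gt θ).isPreconnected
      (x := 1) (by simpa using hθ) (hθ.trans_le hz)
      (by rw [(han 1 (by simpa using hθ)).analyticOrderAt_eq_zero.2 hY1]; exact ENat.zero_ne_top)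
  obtain ⟨σ, t⟩ := s
  change 1 ≤ σ at hs
  by_cases hs1 : (⟨σ, t⟩ : ℂ) = 1
  · rwa [hs1]
  have hs2 : (⟨σ, 2 * t⟩ : ℂ) ≠ 1 := fun h => hs1 <| by simpa [Complex.ext_iff] using h
  have hlim := fun u : ℝ => tendsto_mul_re_of_deriv_eq (t := u) hs (han _ (hθ.trans_le hs))
    (hord _ hs) hD
  have hlim341 := (((hlim 0).const_mul 3).add ((hlim t).const_mul 4)).add (hlim (2 * t))
  rw [if_neg hs1, if_neg hs2] at hlim341
  have hnonneg := ge_of_tendsto hlim341 <| by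
    filter_upwards [self_mem_nhdsWithin] with ε (hε : 0 < ε)
    have := three_four_one_dirichletSeries_nonneg hn ha (hsum (σ + ε) (by linarith)) t
    calc 0 ≤ ε * _ := mul_nonneg hε.le this
      _ = _ := by ring
  have hone : (if (⟨σ, 0⟩ : ℂ) = 1 then (1 : ℝ) else 0) ≤ 1 := by split_ifs <;> norm_num
  have h4ord : (4 * analyticOrderNatAt Y ⟨σ, t⟩ : ℝ) ≤ 3 := by
    linarith [Nat.cast_nonneg (α := ℝ) (analyticOrderNatAt Y ⟨σ, 0⟩),
      Nat.cast_nonneg (α := ℝ) (analyticOrderNatAt Y ⟨σ, 2 * t⟩)]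
  have hzero : analyticOrderNatAt Y ⟨σ, t⟩ = 0 := by
    have : 4 * analyticOrderNatAt Y ⟨σ, t⟩ ≤ 3 := by exact_mod_cast h4ord
    omega
  rw [← (han _ (hθ.trans_le hs)).analyticOrderAt_eq_zero,
    ← Nat.cast_analyticOrderNatAt (hord _ hs), hzero, Nat.cast_zero]

end DirichletSeries

section PrimeIdeals

open NumberField
open scoped nonZeroDivisors Classical

variable {K : Type*} [Field K] [NumberField K]

/-- The absolute norm of a nonzero prime ideal, as a real number. -/
noncomputable def primeNorm (p : HeightOneSpectrum (𝓞 K)) : ℝ := Ideal.absNorm p.asIdeal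

lemma two_le_primeNorm (p : HeightOneSpectrum (𝓞 K)) : 2 ≤ primeNorm p := by
  unfold primeNorm
  exact_mod_cast HeightOneSpectrum.one_lt_absNorm p

lemma primeNorm_pos (p : HeightOneSpectrum (𝓞 K)) : 0 < primeNorm p :=
  two_pos.trans_le (two_le_primeNorm p)

lemma one_le_primeNorm (p : HeightOneSpectrum (𝓞 K)) : 1 ≤ primeNorm p :=
  one_le_two.trans (two_le_primeNorm p)

lemma log_primeNorm_nonneg (p : HeightOneSpectrum (𝓞 K)) : 0 ≤ Real.log (primeNorm p) :=
  Real.log_nonneg (one_le_primeNorm p)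

variable (K) in
lemma finite_primeNorm_le (x : ℝ) : {p : HeightOneSpectrum (𝓞 K) | primeNorm p ≤ x}.Finite :=
  (Ring.HasFiniteQuotients.finite_absNorm_heightOneSpectrum_le (R := 𝓞 K) ⌊x⌋₊).subset
    fun _ hp => Nat.le_floor hp

/-- The prime power `p ^ (m + 1)` attached to the pair `(p, m)`; every prime power occurs once. -/
noncomputable def primePow (q : HeightOneSpectrum (𝓞 K) × ℕ) : (Ideal (𝓞 K))⁰ :=
  ⟨q.1.asIdeal ^ (q.2 + 1), mem_nonZeroDivisors_of_ne_zero (pow_ne_zero _ q.1.ne_bot)⟩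

lemma idealNorm_primePow (q : HeightOneSpectrum (𝓞 K) × ℕ) :
    idealNorm (primePow q) = primeNorm q.1 ^ (q.2 + 1) := by
  simp [idealNorm, primePow, primeNorm]

lemma pow_succ_dvd_iff_lt_count {R : Type*} [CommRing R] [IsDedekindDomain R] {I : Ideal R}
    (hI : I ≠ 0) (p : HeightOneSpectrum R) (m : ℕ) :
    p.asIdeal ^ (m + 1) ∣ I ↔ m < (Associates.mk p.asIdeal).count (Associates.mk I).factors := by
  rw [← Nat.succ_le_iff, ← Associates.prime_pow_dvd_iff_le (Associates.mk_ne_zero.2 hI)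
    p.associates_irreducible, ← Associates.mk_pow, Associates.mk_le_mk_iff_dvd]

lemma log_absNorm_eq_sum {I : Ideal (𝓞 K)} (hI : I ≠ 0) :
    Real.log (Ideal.absNorm I) = ∑ p ∈ (Ideal.finite_factors hI).toFinset,
      (Associates.mk p.asIdeal).count (Associates.mk I).factors * Real.log (primeNorm p) := by
  have hsupp : Function.mulSupport (fun p : HeightOneSpectrum (𝓞 K) => p.maxPowDividing I) ⊆
      (Ideal.finite_factors hI).toFinset := fun p hp => by
    have hcount : 0 < (Associates.mk p.asIdeal).count (Associates.mk I).factors :=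
      Nat.pos_of_ne_zero fun h0 => hp <| by
        simp only [HeightOneSpectrum.maxPowDividing, h0, pow_zero]
    simpa using (pow_succ_dvd_iff_lt_count hI p 0).2 hcount
  conv_lhs => rw [← Ideal.finprod_heightOneSpectrum_factorization hI,
    finprod_eq_prod_of_mulSupport_subset _ hsupp, map_prod]
  simp only [HeightOneSpectrum.maxPowDividing, map_pow, Nat.cast_prod, Nat.cast_pow]
  exact (Real.log_prod fun p _ => pow_ne_zero _ (primeNorm_pos p).ne').trans
    (Finset.sum_congr rfl fun p _ => Real.log_pow _ _)

/-- The identity `Λ * 1 = log`, read off at the ideal `I`. -/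
lemma hasSum_ite_primePow_dvd (I : (Ideal (𝓞 K))⁰) :
    HasSum (fun q => if primePow q ∣ I then Real.log (primeNorm q.1) else 0)
      (Real.log (idealNorm I)) := by
  have hI : (I : Ideal (𝓞 K)) ≠ 0 := nonZeroDivisors.coe_ne_zero I
  let e (p : HeightOneSpectrum (𝓞 K)) : ℕ :=
    (Associates.mk p.asIdeal).count (Associates.mk (I : Ideal (𝓞 K))).factors
  have hdvd : ∀ q : HeightOneSpectrum (𝓞 K) × ℕ, primePow q ∣ I ↔ q.2 < e q.1 := fun q =>
    (nonZeroDivisors_dvd_iff_dvd_coe).trans (pow_succ_dvd_iff_lt_count hI q.1 q.2)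
  rw [← (Equiv.sigmaEquivProd _ ℕ).hasSum_iff, idealNorm, log_absNorm_eq_sum hI]
  have hsum : ∑ p ∈ (Ideal.finite_factors hI).toFinset, (e p : ℝ) * Real.log (primeNorm p) =
      ∑ q ∈ (Ideal.finite_factors hI).toFinset.sigma fun p => Finset.range (e p),
        if q.2 < e q.1 then Real.log (primeNorm q.1) else 0 := by
    rw [Finset.sum_sigma]
    refine Finset.sum_congr rfl fun p _ => ?_
    exact ((Finset.sum_congr rfl fun m hm => if_pos (Finset.mem_range.1 hm)).trans (by simp)).symm
  simp only [hdvd, Function.comp_def, Equiv.sigmaEquivProd_apply]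
  rw [hsum]
  refine hasSum_sum_of_ne_finset_zero fun q hq => if_neg fun hlt => hq ?_
  refine Finset.mem_sigma.2 ⟨?_, Finset.mem_range.2 hlt⟩
  simpa using (dvd_pow_self _ q.2.succ_ne_zero).trans
    ((pow_succ_dvd_iff_lt_count hI q.1 q.2).2 hlt)

/-- The Dirichlet series `∑ log N(p) / N(p ^ m) ^ s` over the prime powers, which is `-ζ'/ζ`. -/
noncomputable def vonMangoldtSeries (K : Type*) [Field K] [NumberField K] : ℂ → ℂ :=
  dirichletSeries (fun q : HeightOneSpectrum (𝓞 K) × ℕ => idealNorm (primePow q))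
    fun q => Real.log (primeNorm q.1)

lemma hasSum_mul_primePow_iff {E : Type*} [AddCommMonoid E] [TopologicalSpace E]
    {f : (Ideal (𝓞 K))⁰ → HeightOneSpectrum (𝓞 K) × ℕ → E} {b : E} :
    HasSum (fun x : (Ideal (𝓞 K))⁰ × _ => f (x.1 * primePow x.2) x.2) b ↔
      HasSum (fun x : (Ideal (𝓞 K))⁰ × _ => if primePow x.2 ∣ x.1 then f x.1 x.2 else 0) b := by
  have hinj : Function.Injective fun x : (Ideal (𝓞 K))⁰ × (HeightOneSpectrum (𝓞 K) × ℕ) =>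
      (x.1 * primePow x.2, x.2) := fun x y hxy => by
    obtain ⟨hI, hq⟩ := Prod.mk.inj hxy
    rw [hq] at hI
    exact Prod.ext (mul_right_cancel hI) hq
  rw [← hinj.hasSum_iff fun x hx => if_neg fun ⟨J, hJ⟩ =>
    hx ⟨(J, x.2), Prod.ext ((mul_comm _ _).trans hJ.symm) rfl⟩]
  simp only [Function.comp_def, dvd_mul_left, if_true]

lemma summable_ite_primePow_dvd {σ : ℝ}
    (hsum : Summable fun I : (Ideal (𝓞 K))⁰ => Real.log (idealNorm I) * idealNorm I ^ (-σ)) :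
    Summable fun x : (Ideal (𝓞 K))⁰ × (HeightOneSpectrum (𝓞 K) × ℕ) =>
      if primePow x.2 ∣ x.1 then Real.log (primeNorm x.2.1) * idealNorm x.1 ^ (-σ) else 0 := by
  have hfiber : ∀ I : (Ideal (𝓞 K))⁰, HasSum (fun q => if primePow q ∣ I then
      Real.log (primeNorm q.1) * idealNorm I ^ (-σ) else 0)
      (Real.log (idealNorm I) * idealNorm I ^ (-σ)) := fun I => by
    simpa only [ite_mul, zero_mul] using (hasSum_ite_primePow_dvd I).mul_right (idealNorm I ^ (-σ))
  refine (summable_prod_of_nonneg fun x => ?_).2 ⟨fun I => (hfiber I).summable, ?_⟩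
  · dsimp only [Pi.zero_apply]
    split_ifs
    · exact mul_nonneg (log_primeNorm_nonneg _) (Real.rpow_nonneg (idealNorm_pos _).le _)
    · rfl
  · simpa only [(hfiber _).tsum_eq] using hsum

lemma summable_log_primeNorm_mul_idealNorm_primePow {σ : ℝ}
    (hsum : Summable fun I : (Ideal (𝓞 K))⁰ => Real.log (idealNorm I) * idealNorm I ^ (-σ)) :
    Summable fun q : HeightOneSpectrum (𝓞 K) × ℕ =>
      Real.log (primeNorm q.1) * idealNorm (primePow q) ^ (-σ) := by
  have h := (hasSum_mul_primePow_iff (f := fun I q => Real.log (primeNorm q.1) *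
    idealNorm I ^ (-σ))).2 (summable_ite_primePow_dvd hsum).hasSum
  simpa only [Function.comp_def, one_mul] using
    h.summable.comp_injective (Prod.mk_right_injective (1 : (Ideal (𝓞 K))⁰))

lemma mul_cpow_neg_idealNorm_mul (J : (Ideal (𝓞 K))⁰) (q : HeightOneSpectrum (𝓞 K) × ℕ) (s : ℂ) :
    ((1 : ℝ) : ℂ) * (idealNorm J : ℂ) ^ (-s) *
        ((Real.log (primeNorm q.1) : ℂ) * (idealNorm (primePow q) : ℂ) ^ (-s)) =
      (Real.log (primeNorm q.1) : ℂ) * (idealNorm (J * primePow q) : ℂ) ^ (-s) := by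
  rw [idealNorm_mul, Complex.ofReal_mul,
    Complex.mul_cpow_ofReal_nonneg (idealNorm_pos _).le (idealNorm_pos _).le, Complex.ofReal_one,
    one_mul, mul_left_comm]

lemma dirichletSeries_log_idealNorm {s : ℂ}
    (hlog : Summable fun I : (Ideal (𝓞 K))⁰ => Real.log (idealNorm I) * idealNorm I ^ (-s.re))
    (hone : Summable fun I : (Ideal (𝓞 K))⁰ => 1 * idealNorm I ^ (-s.re)) :
    dirichletSeries (idealNorm (K := K)) (fun I => Real.log (idealNorm I)) s =
      dirichletSeries (idealNorm (K := K)) (fun _ => 1) s * vonMangoldtSeries K s := by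
  have hζ := summable_norm_dirichletSeries (s := s) (fun I : (Ideal (𝓞 K))⁰ => idealNorm_pos I)
    (fun _ => zero_le_one) hone
  have hΛ := summable_norm_dirichletSeries (s := s)
    (fun q : HeightOneSpectrum (𝓞 K) × ℕ => idealNorm_pos (primePow q))
    (fun q => log_primeNorm_nonneg q.1) (summable_log_primeNorm_mul_idealNorm_primePow hlog)
  have hprod := (summable_mul_of_summable_norm hζ hΛ).hasSum
  rw [← tsum_mul_tsum_of_summable_norm hζ hΛ] at hprod
  simp only [mul_cpow_neg_idealNorm_mul] at hprod
  have hfiber : ∀ I : (Ideal (𝓞 K))⁰, HasSum (fun q => if primePow q ∣ I then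
      (Real.log (primeNorm q.1) : ℂ) * (idealNorm I : ℂ) ^ (-s) else 0)
      (Real.log (idealNorm I) * (idealNorm I : ℂ) ^ (-s)) := fun I => by
    simpa only [Complex.ofReal_zero, apply_ite Complex.ofReal, ite_mul, zero_mul] using
      (Complex.hasSum_ofReal.2 (hasSum_ite_primePow_dvd I)).mul_right ((idealNorm I : ℂ) ^ (-s))
  exact (((hasSum_mul_primePow_iff (f := fun I q => (Real.log (primeNorm q.1) : ℂ) *
    (idealNorm I : ℂ) ^ (-s))).1 hprod).prod_fiberwise hfiber).tsum_eq

variable (K) in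
theorem exists_hasSum_idealNorm_cpow_neg : ∃ θ < 1, ∃ Y : ℂ → ℂ,
    (∀ s : ℂ, θ < s.re → DifferentiableAt ℂ Y s) ∧ Y 1 ≠ 0 ∧
    ∀ s : ℂ, 1 < s.re →
      HasSum (fun I : (Ideal (𝓞 K))⁰ => (idealNorm I : ℂ) ^ (-s)) (Y s / (s - 1)) := by
  have hd : (1 : ℝ) ≤ Module.finrank ℚ K := by exact_mod_cast Module.finrank_pos
  have hθ : 1 - (Module.finrank ℚ K : ℝ)⁻¹ < 1 := sub_lt_self 1 (by positivity)
  obtain ⟨c, A, hc, h⟩ := exists_abs_smoothCount_idealNorm_sub_le K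
  obtain ⟨Y, hY, hY1, hsum⟩ := exists_hasSum_cpow_neg (one_le_idealNorm (K := K))
    (finite_idealNorm_le K) (sub_nonneg.2 (inv_le_one_of_one_le₀ hd)) hθ h
  refine ⟨_, hθ, Y, hY, ?_, hsum⟩
  rw [hY1]
  exact div_ne_zero (Complex.ofReal_ne_zero.2 hc.ne') (tentMellin_ne_zero (by simp))

lemma summable_idealNorm_rpow_neg {σ : ℝ} (hσ : 1 < σ) :
    Summable fun I : (Ideal (𝓞 K))⁰ => 1 * idealNorm I ^ (-σ) := by
  obtain ⟨_, _, Y, -, -, hsum⟩ := exists_hasSum_idealNorm_cpow_neg K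
  refine (hsum σ (by simpa using hσ)).summable.norm.congr fun I => ?_
  rw [Complex.norm_cpow_eq_rpow_re_of_pos (idealNorm_pos I), one_mul, Complex.neg_re,
    Complex.ofReal_re]

lemma summable_log_idealNorm_mul_rpow_neg {σ : ℝ} (hσ : 1 < σ) :
    Summable fun I : (Ideal (𝓞 K))⁰ => Real.log (idealNorm I) * idealNorm I ^ (-σ) := by
  simpa only [one_mul] using summable_log_mul_rpow_neg one_le_idealNorm (fun _ => zero_le_one)
    (fun _ hτ => summable_idealNorm_rpow_neg (K := K) hτ) hσ

lemma deriv_eq_mul_sub_vonMangoldtSeries {Y : ℂ → ℂ} {s : ℂ} (hY : DifferentiableAt ℂ Y s)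
    (hsum : ∀ z : ℂ, 1 < z.re →
      HasSum (fun I : (Ideal (𝓞 K))⁰ => (idealNorm I : ℂ) ^ (-z)) (Y z / (z - 1)))
    (hs : 1 < s.re) : deriv Y s = Y s * (1 / (s - 1) - vonMangoldtSeries K s) := by
  have hζ : ∀ z : ℂ, 1 < z.re →
      dirichletSeries (idealNorm (K := K)) (fun _ => 1) z = Y z / (z - 1) := fun z hz => by
    simpa only [dirichletSeries, Complex.ofReal_one, one_mul] using (hsum z hz).tsum_eq
  have hs1 : s - 1 ≠ 0 := sub_ne_zero.2 fun h => by simp [h] at hs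
  have hζ' := deriv_dirichletSeries one_le_idealNorm (fun _ => zero_le_one)
    (fun _ hτ => summable_idealNorm_rpow_neg (K := K) hτ) hs
  have heq : dirichletSeries (idealNorm (K := K)) (fun _ => 1) =ᶠ[nhds s]
      fun z => Y z / (z - 1) := by
    filter_upwards [(isOpen_lt continuous_const Complex.continuous_re).mem_nhds hs] with z hz
    exact hζ z hz
  simp only [one_mul] at hζ'
  rw [dirichletSeries_log_idealNorm (summable_log_idealNorm_mul_rpow_neg hs)
      (summable_idealNorm_rpow_neg hs), hζ s hs, heq.deriv_eq,
    (hY.hasDerivAt.fun_div ((hasDerivAt_id' s).sub_const 1) hs1).deriv] at hζ'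
  field_simp at hζ' ⊢
  linear_combination hζ'

variable (K) in
/-- `Y s` is `(s - 1) * ζ_K(s)`. -/
theorem exists_ne_zero_deriv_eq_mul_vonMangoldtSeries : ∃ θ < 1, ∃ Y : ℂ → ℂ,
    (∀ s : ℂ, θ < s.re → DifferentiableAt ℂ Y s) ∧ (∀ s : ℂ, 1 ≤ s.re → Y s ≠ 0) ∧
    ∀ s : ℂ, 1 < s.re → deriv Y s = Y s * (1 / (s - 1) - vonMangoldtSeries K s) := by
  obtain ⟨θ, hθ, Y, hY, hY1, hsum⟩ := exists_hasSum_idealNorm_cpow_neg K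
  have hD : ∀ s : ℂ, 1 < s.re → deriv Y s = Y s * (1 / (s - 1) - vonMangoldtSeries K s) :=
    fun s hs => deriv_eq_mul_sub_vonMangoldtSeries (hY s (hθ.trans hs)) hsum hs
  exact ⟨θ, hθ, Y, hY, fun s => ne_zero_of_deriv_eq_mul_dirichletSeries
    (fun q => idealNorm_pos (primePow q)) (fun q => log_primeNorm_nonneg q.1)
    (fun σ hσ => summable_log_primeNorm_mul_idealNorm_primePow
      (summable_log_idealNorm_mul_rpow_neg hσ)) hθ hY hY1 hD, hD⟩

lemma tsum_prod_nat_eq_add {ι : Type*} {f : ι × ℕ → ℂ} (hf : Summable f) :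
    ∑' q, f q = ∑' i, f (i, 0) + ∑' q : ι × ℕ, f (q.1, q.2 + 1) := by
  have hzero : Summable fun i => f (i, 0) := hf.comp_injective (Prod.mk_left_injective 0)
  have hsucc : Summable fun q : ι × ℕ => f (q.1, q.2 + 1) :=
    hf.comp_injective (Function.injective_id.prodMap (add_left_injective 1))
  rw [hf.tsum_prod, hsucc.tsum_prod, ← hzero.tsum_add hsucc.prod]
  exact tsum_congr fun i => (hf.prod_factor i).tsum_eq_zero_add

lemma continuousOn_dirichletSeries {ι : Type*} {n a : ι → ℝ} (hn : ∀ i, 1 ≤ n i)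
    (ha : ∀ i, 0 ≤ a i) {σ : ℝ} (hsum : Summable fun i => a i * n i ^ (-σ)) :
    ContinuousOn (dirichletSeries n a) {s | σ ≤ s.re} := by
  have hn0 : ∀ i, 0 < n i := fun i => one_pos.trans_le (hn i)
  refine continuousOn_tsum (fun i => ?_) hsum fun i s hs => ?_
  · exact (continuous_const.mul (continuous_neg.const_cpow
      (.inl (Complex.ofReal_ne_zero.2 (hn0 i).ne')))).continuousOn
  · rw [norm_mul_cpow_neg (hn0 i) (ha i)]
    exact mul_le_mul_of_nonneg_left
      (Real.rpow_le_rpow_of_exponent_le (hn i) (neg_le_neg hs)) (ha i)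

variable (K) in
lemma summable_log_primeNorm_mul_inv_pow_two :
    Summable fun p : HeightOneSpectrum (𝓞 K) => Real.log (primeNorm p) * (primeNorm p ^ 2)⁻¹ := by
  have h := summable_log_primeNorm_mul_idealNorm_primePow
    (summable_log_idealNorm_mul_rpow_neg (K := K) one_lt_two)
  refine (h.comp_injective (Prod.mk_left_injective 0)).congr fun p => ?_
  rw [Function.comp_apply, idealNorm_primePow, zero_add, pow_one,
    Real.rpow_neg (primeNorm_pos p).le, Real.rpow_two]

variable (K) in
lemma summable_log_primeNorm_mul_higher_primePow :
    Summable fun q : HeightOneSpectrum (𝓞 K) × ℕ =>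
      Real.log (primeNorm q.1) * idealNorm (primePow (q.1, q.2 + 1)) ^ (-1 : ℝ) := by
  have hgeom := (summable_log_primeNorm_mul_inv_pow_two K).mul_of_nonneg
    (summable_geometric_of_lt_one (by norm_num) (by norm_num : (2 : ℝ)⁻¹ < 1))
    (fun p => mul_nonneg (log_primeNorm_nonneg p) (by positivity)) fun m => by positivity
  refine .of_nonneg_of_le (fun q => mul_nonneg (log_primeNorm_nonneg _)
    (Real.rpow_nonneg (idealNorm_pos _).le _)) (fun q => ?_) hgeom
  have hpow : primeNorm q.1 ^ 2 * 2 ^ q.2 ≤ primeNorm q.1 ^ (q.2 + 1 + 1) := by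
    rw [add_assoc, add_comm q.2, pow_add]
    exact mul_le_mul_of_nonneg_left (pow_le_pow_left₀ zero_le_two (two_le_primeNorm _) _)
      (sq_nonneg _)
  have := pow_pos (primeNorm_pos q.1) 2
  rw [idealNorm_primePow, Real.rpow_neg_one, mul_assoc, inv_pow, ← mul_inv]
  exact mul_le_mul_of_nonneg_left (inv_anti₀ (by positivity) hpow) (log_primeNorm_nonneg _)

variable (K) in
/-- The part of `vonMangoldtSeries K` carried by the prime powers with exponent at least `2`. -/
noncomputable def higherPrimePowSeries : ℂ → ℂ :=
  dirichletSeries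
    (fun q : HeightOneSpectrum (𝓞 K) × ℕ => idealNorm (primePow (q.1, q.2 + 1)))
    fun q => Real.log (primeNorm q.1)

variable (K) in
lemma continuousOn_higherPrimePowSeries :
    ContinuousOn (higherPrimePowSeries K) {s | 1 ≤ s.re} := by
  unfold higherPrimePowSeries
  refine continuousOn_dirichletSeries ?_ ?_ ?_
  · exact fun q => one_le_idealNorm _
  · exact fun q => log_primeNorm_nonneg _
  · exact summable_log_primeNorm_mul_higher_primePow K

lemma vonMangoldtSeries_eq_add {s : ℂ} (hs : 1 < s.re) :
    vonMangoldtSeries K s =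
      dirichletSeries (primeNorm (K := K)) (fun p => Real.log (primeNorm p)) s +
        higherPrimePowSeries K s := by
  have h := tsum_prod_nat_eq_add (summable_norm_dirichletSeries
    (fun q : HeightOneSpectrum (𝓞 K) × ℕ => idealNorm_pos (primePow q))
    (fun q => log_primeNorm_nonneg q.1) (summable_log_primeNorm_mul_idealNorm_primePow
      (summable_log_idealNorm_mul_rpow_neg hs))).of_norm
  simpa only [vonMangoldtSeries, higherPrimePowSeries, dirichletSeries, idealNorm_primePow,
    zero_add, pow_one] using h

variable (K) in
theorem exists_dirichletSeries_primeNorm_eq : ∃ F : ℂ → ℂ, ContinuousOn F {s | 1 ≤ s.re} ∧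
    ∀ s : ℂ, 1 < s.re → dirichletSeries (primeNorm (K := K)) (fun p => Real.log (primeNorm p)) s =
      1 / (s - 1) + F s := by
  obtain ⟨θ, hθ, Y, hY, hY0, hD⟩ := exists_ne_zero_deriv_eq_mul_vonMangoldtSeries K
  have han : AnalyticOnNhd ℂ Y {s | θ < s.re} :=
    DifferentiableOn.analyticOnNhd (fun z hz => (hY z hz).differentiableWithinAt)
      (isOpen_lt continuous_const Complex.continuous_re)
  have hsub : {s : ℂ | 1 ≤ s.re} ⊆ {s : ℂ | θ < s.re} := fun s hs => hθ.trans_le hs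
  have hlog : ContinuousOn (logDeriv Y) {s | 1 ≤ s.re} :=
    (han.deriv.continuousOn.mono hsub).div (han.continuousOn.mono hsub) hY0
  refine ⟨fun s => -(logDeriv Y s + higherPrimePowSeries K s),
    (hlog.add (continuousOn_higherPrimePowSeries K)).neg, fun s hs => ?_⟩
  have hlogDeriv : logDeriv Y s = 1 / (s - 1) - vonMangoldtSeries K s := by
    rw [logDeriv_apply, hD s hs, mul_div_cancel_left₀ _ (hY0 s hs.le)]
  simp only [hlogDeriv, vonMangoldtSeries_eq_add hs]
  ring

lemma asIdeal_dvd_span_primorial {p : HeightOneSpectrum (𝓞 K)} {x : ℝ} (hp : primeNorm p ≤ x) :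
    p.asIdeal ∣ Ideal.span {(primorial ⌊x⌋₊ : 𝓞 K)} := by
  have := p.isMaximal
  obtain ⟨l, m, hm, hl, hprime, hnorm⟩ := Ideal.exists_prime_and_absNorm_eq_pow p.asIdeal
  have hlx : l ≤ ⌊x⌋₊ := (Nat.le_self_pow hm.ne' l).trans (hnorm ▸ Nat.le_floor hp)
  obtain ⟨r, hr⟩ := hprime.dvd_primorial_iff.2 hlx
  rw [Ideal.dvd_span_singleton, hr, Nat.cast_mul]
  exact p.asIdeal.mul_mem_right _ hl

/-- Chebyshev's bound: a product of distinct primes of norm at most `x` divides the primorial. -/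
lemma summatory_log_primeNorm_le {x : ℝ} (hx : 1 ≤ x) :
    summatory (primeNorm (K := K)) (fun p => Real.log (primeNorm p)) x ≤
      Module.finrank ℚ K * Real.log 4 * x := by
  have hfin := finite_primeNorm_le K x
  have hdvd : ∏ p ∈ hfin.toFinset, p.asIdeal ∣ Ideal.span {(primorial ⌊x⌋₊ : 𝓞 K)} := by
    have hinj : Set.InjOn HeightOneSpectrum.asIdeal
        (hfin.toFinset : Set (HeightOneSpectrum (𝓞 K))) :=
      fun p _ q _ => HeightOneSpectrum.ext
    rw [← Finset.prod_image (f := fun I => I) hinj]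
    refine Finset.prod_primes_dvd _ (fun I hI => ?_) fun I hI => ?_
    all_goals obtain ⟨p, hp, rfl⟩ := Finset.mem_image.1 hI
    · exact p.prime
    · exact asIdeal_dvd_span_primorial (hfin.mem_toFinset.1 hp)
  have hle : ∏ p ∈ hfin.toFinset, primeNorm p ≤ (primorial ⌊x⌋₊ : ℝ) ^ Module.finrank ℚ K := by
    have h := Nat.le_of_dvd (pow_pos (primorial_pos _) _) <| (map_dvd Ideal.absNorm hdvd).trans
      (Ideal.absNorm_span_natCast _).dvd
    rw [map_prod, RingOfIntegers.rank] at h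
    simp only [primeNorm]
    exact_mod_cast h
  calc summatory (primeNorm (K := K)) (fun p => Real.log (primeNorm p)) x
      = Real.log (∏ p ∈ hfin.toFinset, primeNorm p) := by
        rw [summatory_eq_sum _ hfin, Real.log_prod fun p _ => (primeNorm_pos p).ne']
    _ ≤ Real.log ((primorial ⌊x⌋₊ : ℝ) ^ Module.finrank ℚ K) :=
        Real.log_le_log (Finset.prod_pos fun p _ => primeNorm_pos p) hle
    _ = Module.finrank ℚ K * Chebyshev.theta x := by
        rw [Real.log_pow, Chebyshev.theta_eq_log_primorial]
    _ ≤ Module.finrank ℚ K * (Real.log 4 * x) := by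
        gcongr
        exact Chebyshev.theta_le_log4_mul_x (zero_le_one.trans hx)
    _ = Module.finrank ℚ K * Real.log 4 * x := (mul_assoc _ _ _).symm

variable (K) in
/-- Landau's prime ideal theorem. -/
theorem tendsto_summatory_log_primeNorm_div_self :
    Tendsto (fun x => summatory (primeNorm (K := K)) (fun p => Real.log (primeNorm p)) x / x)
      atTop (nhds 1) := by
  obtain ⟨F, hF, hFe⟩ := exists_dirichletSeries_primeNorm_eq K
  refine tendsto_summatory_div_self one_le_primeNorm (finite_primeNorm_le K) log_primeNorm_nonneg
    (fun x hx => summatory_log_primeNorm_le hx) (fun σ hσ => ?_) hF hFe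
  have h := (summable_log_primeNorm_mul_idealNorm_primePow
    (summable_log_idealNorm_mul_rpow_neg (K := K) hσ)).comp_injective (Prod.mk_left_injective 0)
  simpa only [Function.comp_def, idealNorm_primePow, zero_add, pow_one] using h

end PrimeIdeals

section PartialSummation

variable {ι E : Type*} [NormedAddCommGroup E] [NormedSpace ℝ E] {n : ι → ℝ} {b M x y : ℝ}

lemma ncard_mul_log_le_add (hn : ∀ i, 1 ≤ n i) (hfin : ∀ x, {i | n i ≤ x}.Finite)
    (hy : 0 < y) (hyx : y ≤ x) :
    {i | n i ≤ x}.ncard * Real.log y ≤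
      {i | n i ≤ y}.ncard * Real.log y + summatory n (fun i => Real.log (n i)) x := by
  classical
  have hsub : (hfin y).toFinset ⊆ (hfin x).toFinset :=
    Set.Finite.toFinset_mono fun i hi => hi.trans hyx
  simp only [Set.ncard_eq_toFinset_card _ (hfin _), summatory_eq_sum _ (hfin x), ← nsmul_eq_mul,
    ← Finset.sum_const]
  rw [← Finset.sum_sdiff hsub, add_comm]
  gcongr
  calc ∑ _i ∈ (hfin x).toFinset \ (hfin y).toFinset, Real.log y
      ≤ ∑ i ∈ (hfin x).toFinset \ (hfin y).toFinset, Real.log (n i) :=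
        Finset.sum_le_sum fun i hi => Real.log_le_log hy <| by
          simpa using (not_le.1 fun h => (Finset.mem_sdiff.1 hi).2 ((hfin y).mem_toFinset.2 h)).le
    _ ≤ ∑ i ∈ (hfin x).toFinset, Real.log (n i) :=
        Finset.sum_le_sum_of_subset_of_nonneg Finset.sdiff_subset fun i _ _ =>
          Real.log_nonneg (hn i)

lemma ncard_mul_log_le_summatory (hb : 0 < b) (hn : ∀ i, b ≤ n i)
    (hfin : {i | n i ≤ x}.Finite) :
    {i | n i ≤ x}.ncard * Real.log b ≤ summatory n (fun i => Real.log (n i)) x := by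
  rw [Set.ncard_eq_toFinset_card _ hfin, summatory_eq_sum _ hfin, ← nsmul_eq_mul]
  exact Finset.card_nsmul_le_sum _ _ _ fun i _ => Real.log_le_log hb (hn i)

lemma summatory_log_le_ncard_mul_log (hn : ∀ i, 0 < n i) (hfin : {i | n i ≤ x}.Finite) :
    summatory n (fun i => Real.log (n i)) x ≤ {i | n i ≤ x}.ncard * Real.log x := by
  rw [Set.ncard_eq_toFinset_card _ hfin, summatory_eq_sum _ hfin, ← nsmul_eq_mul]
  exact Finset.sum_le_card_nsmul _ _ _ fun i hi =>
    Real.log_le_log (hn i) (hfin.mem_toFinset.1 hi)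

lemma norm_log_smul_summatory_sub_le (hn : ∀ i, 0 < n i) (hfin : {i | n i ≤ x}.Finite)
    {s : ι → E} (hs : ∀ i, ‖s i‖ ≤ M) :
    ‖Real.log x • summatory n s x - summatory n (fun i => Real.log (n i) • s i) x‖ ≤
      ({i | n i ≤ x}.ncard * Real.log x - summatory n (fun i => Real.log (n i)) x) * M := by
  simp only [Set.ncard_eq_toFinset_card _ hfin, summatory_eq_sum _ hfin, Finset.smul_sum,
    ← Finset.sum_sub_distrib, ← sub_smul, ← nsmul_eq_mul, ← Finset.sum_const, Finset.sum_mul]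
  refine norm_sum_le_of_le _ fun i hi => ?_
  have hlog : 0 ≤ Real.log x - Real.log (n i) :=
    sub_nonneg.2 (Real.log_le_log (hn i) (hfin.mem_toFinset.1 hi))
  rw [norm_smul, Real.norm_of_nonneg hlog]
  exact mul_le_mul_of_nonneg_left (hs i) hlog

lemma norm_inv_ncard_smul_summatory_le (hfin : {i | n i ≤ x}.Finite) (hM : 0 ≤ M) {s : ι → E}
    (hs : ∀ i, ‖s i‖ ≤ M) : ‖({i | n i ≤ x}.ncard : ℝ)⁻¹ • summatory n s x‖ ≤ M := by
  rw [norm_smul, norm_inv, Real.norm_natCast, summatory_eq_sum _ hfin,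
    Set.ncard_eq_toFinset_card _ hfin]
  refine inv_mul_le_of_le_mul₀ (Nat.cast_nonneg _) hM ?_
  simpa using norm_sum_le_of_le _ fun i _ => hs i

lemma ncard_smul_inv_ncard_smul_summatory (hfin : {i | n i ≤ x}.Finite) (s : ι → E) :
    ({i | n i ≤ x}.ncard : ℝ) • ({i | n i ≤ x}.ncard : ℝ)⁻¹ • summatory n s x =
      summatory n s x := by
  rcases Set.eq_empty_or_nonempty {i | n i ≤ x} with hempty | hne
  · simp [summatory, hempty]
  · exact smul_inv_smul₀ (Nat.cast_ne_zero.2 (Set.ncard_ne_zero_of_mem hne.some_mem hfin)) _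

lemma tendsto_log_div_log_div_log_sq :
    Tendsto (fun x => Real.log x / Real.log (x / Real.log x ^ 2)) atTop (nhds 1) := by
  have h : Tendsto (fun x => Real.log (Real.log x) / Real.log x) atTop (nhds 0) :=
    Real.isLittleO_log_id_atTop.tendsto_div_nhds_zero.comp Real.tendsto_log_atTop
  have hlim := ((h.const_mul 2).const_sub 1).inv₀ (by norm_num)
  rw [mul_zero, sub_zero, inv_one] at hlim
  refine hlim.congr' ?_
  filter_upwards [eventually_gt_atTop 1] with x hx
  have hlog := Real.log_pos hx
  rw [Real.log_div (by positivity) (by positivity), Real.log_pow, Nat.cast_ofNat]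
  field_simp

lemma tendsto_div_log_sq_atTop : Tendsto (fun x => x / Real.log x ^ 2) atTop atTop := by
  have h : Tendsto (fun x => Real.log x ^ 2 / x) atTop (nhdsWithin 0 (Set.Ioi 0)) := by
    refine tendsto_nhdsWithin_iff.2
      ⟨(Real.isLittleO_pow_log_id_atTop (n := 2)).tendsto_div_nhds_zero, ?_⟩
    filter_upwards [eventually_gt_atTop 1] with x hx
    have := Real.log_pos hx
    exact Set.mem_Ioi.2 (by positivity)
  exact h.inv_tendsto_nhdsGT_zero.congr fun x => inv_div _ _

lemma ncard_mul_log_div_self_le (hb : 1 < b) (hn : ∀ i, b ≤ n i)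
    (hfin : ∀ x, {i | n i ≤ x}.Finite) (hx : Real.exp 1 ≤ x) (hy : 1 < x / Real.log x ^ 2)
    (hθ : summatory n (fun i => Real.log (n i)) (x / Real.log x ^ 2) / (x / Real.log x ^ 2) ≤ M) :
    {i | n i ≤ x}.ncard * Real.log x / x ≤ M / Real.log b * (Real.log x)⁻¹ +
      Real.log x / Real.log (x / Real.log x ^ 2) *
        (summatory n (fun i => Real.log (n i)) x / x) := by
  have hx0 : 0 < x := (Real.exp_pos 1).trans_le hx
  have hlogx : 1 ≤ Real.log x := (Real.le_log_iff_exp_le hx0).2 hx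
  set y := x / Real.log x ^ 2 with hydef
  set ϑ := summatory n fun i => Real.log (n i)
  have hy0 : 0 < y := one_pos.trans hy
  have hlogb := Real.log_pos hb
  have hlogy := Real.log_pos hy
  have hyx : y ≤ x := div_le_self hx0.le (one_le_pow₀ hlogx)
  have hπy : ({i | n i ≤ y}.ncard : ℝ) ≤ M / Real.log b * y := by
    rw [div_mul_eq_mul_div, le_div_iff₀ hlogb]
    exact (ncard_mul_log_le_summatory (one_pos.trans hb) hn (hfin y)).trans
      ((div_le_iff₀ hy0).1 hθ)
  have hsplit := ncard_mul_log_le_add (fun i => hb.le.trans (hn i)) hfin hy0 hyx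
  calc {i | n i ≤ x}.ncard * Real.log x / x
      = {i | n i ≤ x}.ncard * Real.log y * (Real.log x / (Real.log y * x)) := by field_simp
    _ ≤ ({i | n i ≤ y}.ncard * Real.log y + ϑ x) * (Real.log x / (Real.log y * x)) := by gcongr
    _ = {i | n i ≤ y}.ncard * (Real.log x / x) + Real.log x / Real.log y * (ϑ x / x) := by
        field_simp
    _ ≤ M / Real.log b * y * (Real.log x / x) + Real.log x / Real.log y * (ϑ x / x) := by gcongr
    _ = M / Real.log b * (Real.log x)⁻¹ + Real.log x / Real.log y * (ϑ x / x) := by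
        congr 1
        rw [hydef]
        field_simp

/-- Elements of size at most `y = x / log² x` are negligible, and the others satisfy
`log y ≤ log (n i) ≤ log x` with `log y ~ log x`. -/
lemma tendsto_ncard_mul_log_div_self (hb : 1 < b) (hn : ∀ i, b ≤ n i)
    (hfin : ∀ x, {i | n i ≤ x}.Finite)
    (hθ : Tendsto (fun x => summatory n (fun i => Real.log (n i)) x / x) atTop (nhds 1)) :
    Tendsto (fun x => {i | n i ≤ x}.ncard * Real.log x / x) atTop (nhds 1) := by
  have hupper : Tendsto (fun x => 2 / Real.log b * (Real.log x)⁻¹ +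
      Real.log x / Real.log (x / Real.log x ^ 2) *
        (summatory n (fun i => Real.log (n i)) x / x)) atTop (nhds 1) := by
    simpa using (Real.tendsto_log_atTop.inv_tendsto_atTop.const_mul (2 / Real.log b)).add
      (tendsto_log_div_log_div_log_sq.mul hθ)
  refine tendsto_of_tendsto_of_tendsto_of_le_of_le' hθ hupper ?_ ?_
  · filter_upwards [eventually_gt_atTop 0] with x hx
    gcongr
    exact summatory_log_le_ncard_mul_log (fun i => (one_pos.trans hb).trans_le (hn i)) (hfin x)
  · filter_upwards [eventually_ge_atTop (Real.exp 1),
      tendsto_div_log_sq_atTop.eventually_gt_atTop 1,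
      tendsto_div_log_sq_atTop.eventually (hθ.eventually_le_const one_lt_two)] with x hx hy hθy
    exact ncard_mul_log_div_self_le hb hn hfin hx hy hθy

theorem tendsto_inv_smul_summatory_log_smul_sub (hb : 1 < b) (hn : ∀ i, b ≤ n i)
    (hfin : ∀ x, {i | n i ≤ x}.Finite)
    (hθ : Tendsto (fun x => summatory n (fun i => Real.log (n i)) x / x) atTop (nhds 1))
    {s : ι → E} (hs : ∀ i, ‖s i‖ ≤ M) :
    Tendsto (fun x => x⁻¹ • summatory n (fun i => Real.log (n i) • s i) x -
      ({i | n i ≤ x}.ncard : ℝ)⁻¹ • summatory n s x) atTop (nhds 0) := by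
  set π : ℝ → ℝ := fun x => {i | n i ≤ x}.ncard
  set ϑ := summatory n fun i => Real.log (n i)
  have hn0 : ∀ i, 0 < n i := fun i => (one_pos.trans hb).trans_le (hn i)
  have hsM : ∀ i, ‖s i‖ ≤ |M| := fun i => (hs i).trans (le_abs_self M)
  have hπ : Tendsto (fun x => π x * Real.log x / x) atTop (nhds 1) :=
    tendsto_ncard_mul_log_div_self hb hn hfin hθ
  have hmain : Tendsto (fun x => x⁻¹ •
      (Real.log x • summatory n s x - summatory n (fun i => Real.log (n i) • s i) x))
      atTop (nhds 0) := by
    refine squeeze_zero_norm' (a := fun x => (π x * Real.log x / x - ϑ x / x) * |M|) ?_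
      (by simpa using (hπ.sub hθ).mul_const |M|)
    filter_upwards [eventually_gt_atTop 0] with x hx
    rw [norm_smul, Real.norm_of_nonneg (inv_nonneg.2 hx.le), ← sub_div, div_mul_eq_mul_div,
      div_eq_inv_mul]
    gcongr
    exact norm_log_smul_summatory_sub_le hn0 (hfin x) hsM
  have hcount : Tendsto (fun x => (π x * Real.log x / x - 1) • (π x)⁻¹ • summatory n s x)
      atTop (nhds 0) := by
    refine squeeze_zero_norm (a := fun x => |π x * Real.log x / x - 1| * |M|) (fun x => ?_)
      (by simpa using (hπ.sub_const 1).abs.mul_const |M|)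
    rw [norm_smul, Real.norm_eq_abs]
    gcongr
    exact norm_inv_ncard_smul_summatory_le (hfin x) (abs_nonneg M) hsM
  have hdiff := hcount.sub hmain
  rw [sub_zero] at hdiff
  refine hdiff.congr fun x => ?_
  have hcancel : (π x * Real.log x / x) • (π x)⁻¹ • summatory n s x =
      x⁻¹ • Real.log x • summatory n s x := by
    rw [mul_div_assoc, mul_comm, mul_smul, ncard_smul_inv_ncard_smul_summatory (hfin x),
      div_eq_inv_mul, mul_smul]
  rw [sub_smul, hcancel, one_smul, smul_sub]
  abel

end PartialSummation

end PrimeIdealTheorem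

open PrimeIdealTheorem in
theorem nagao_lemma_forward_general {k : Type*} [Field k] [NumberField k] {E : Type*}
    [NormedAddCommGroup E] [NormedSpace ℝ E]
    (s : HeightOneSpectrum (NumberField.RingOfIntegers k) → E) (M : ℝ) (hs : ∀ p, ‖s p‖ ≤ M) :
    Tendsto
      (fun N : ℝ =>
        N⁻¹ • (∑ᶠ p ∈ {p : HeightOneSpectrum (NumberField.RingOfIntegers k) |
            (Ideal.absNorm p.asIdeal : ℝ) ≤ N}, Real.log (Ideal.absNorm p.asIdeal) • s p) -
        (({p : HeightOneSpectrum (NumberField.RingOfIntegers k) |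
            (Ideal.absNorm p.asIdeal : ℝ) ≤ N}).ncard : ℝ)⁻¹ •
          ∑ᶠ p ∈ {p : HeightOneSpectrum (NumberField.RingOfIntegers k) |
            (Ideal.absNorm p.asIdeal : ℝ) ≤ N}, s p)
      atTop (nhds 0) :=
  tendsto_inv_smul_summatory_log_smul_sub one_lt_two two_le_primeNorm (finite_primeNorm_le k)
    (tendsto_summatory_log_primeNorm_div_self k) hs

/-- Let `k` be a number field and `s` a family of nonnegative real
numbers indexed by the nonzero prime ideals of the ring of integers of `k`, bounded
above by `M`.  If `D_N / π_k(N)` converges to `L` as `N → ∞`, then `C_N / N` also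
converges to `L`, where
`C_N = Σ_{𝔭 : N(𝔭) ≤ N} s_𝔭 log N(𝔭)`, `D_N = Σ_{𝔭 : N(𝔭) ≤ N} s_𝔭` and
`π_k(N) = #{𝔭 : N(𝔭) ≤ N}`. -/
theorem nagao_lemma_forward
    (k : Type*) [Field k] [NumberField k]
    (s : HeightOneSpectrum (NumberField.RingOfIntegers k) → ℝ)
    (M : ℝ)
    (hs_nonneg : ∀ p, 0 ≤ s p)
    (hs_bdd : ∀ p, s p ≤ M)
    (L : ℝ)
    (hD : Tendsto
      (fun N : ℝ =>
        (∑ᶠ p ∈ {p : HeightOneSpectrum (NumberField.RingOfIntegers k) |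
            (Ideal.absNorm p.asIdeal : ℝ) ≤ N}, s p) /
        (({p : HeightOneSpectrum (NumberField.RingOfIntegers k) |
            (Ideal.absNorm p.asIdeal : ℝ) ≤ N}).ncard : ℝ))
      atTop (nhds L)) :
    Tendsto
      (fun N : ℝ =>
        (∑ᶠ p ∈ {p : HeightOneSpectrum (NumberField.RingOfIntegers k) |
            (Ideal.absNorm p.asIdeal : ℝ) ≤ N},
          s p * Real.log (Ideal.absNorm p.asIdeal)) / N)
      atTop (nhds L) := by
  have hdiff := nagao_lemma_forward_general s M fun p =>
    (Real.norm_of_nonneg (hs_nonneg p)).trans_le (hs_bdd p)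
  simpa [div_eq_inv_mul, mul_comm] using hdiff.add hD
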